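/- arXiv:1907.06122 — 2 statements merged into one kernel-verified Lean document; each statement's English description precedes it below -/
import Mathlib

section
/- Let n be odd, let Ω ⊂ ℝⁿ be a bounded open convex set with nonempty interior, and let f be a continuous function on the closure of Ω that is positive and subharmonic on Ω (Δf ≥ 0). Then (1/|Ω|) ∫_Ω f dx ≤ (n^{3/2}/|∂Ω|) ∫_{∂Ω} f dσ. -/
open MeasureTheory

/-- The Laplacian of `f : ℝⁿ → ℝ`, as the sum of the second partial derivatives. -/
noncomputable def laplacian {n : ℕ} (f : EuclideanSpace ℝ (Fin n) → ℝ)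
    (x : EuclideanSpace ℝ (Fin n)) : ℝ :=
  ∑ i : Fin n,
    fderiv ℝ (fun y => fderiv ℝ f y (EuclideanSpace.single i (1 : ℝ))) x
      (EuclideanSpace.single i (1 : ℝ))


namespace HH

open Set Filter Topology

/-- twice differentiable with nonnegative Laplacian on `U` -/
structure SubH {n : ℕ} (f : EuclideanSpace ℝ (Fin n) → ℝ) (U : Set (EuclideanSpace ℝ (Fin n))) :
    Prop where
  d1 : ∀ x ∈ U, DifferentiableAt ℝ f x
  d2 : ∀ x ∈ U, DifferentiableAt ℝ (fun y => fderiv ℝ f y) x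
  lap : ∀ x ∈ U, 0 ≤ laplacian f x

lemma lap_eq {n : ℕ} {f : EuclideanSpace ℝ (Fin n) → ℝ} {x : EuclideanSpace ℝ (Fin n)}
    (h : DifferentiableAt ℝ (fun y => fderiv ℝ f y) x) :
    laplacian f x = ∑ i : Fin n, (fderiv ℝ (fun y => fderiv ℝ f y) x
      (EuclideanSpace.single i (1 : ℝ))) (EuclideanSpace.single i (1 : ℝ)) := by
  unfold laplacian
  refine Finset.sum_congr rfl fun i _ => ?_
  rw [fderiv_clm_apply h (differentiableAt_const _)]
  simp

lemma fderiv_add_ev {n : ℕ} {f g : EuclideanSpace ℝ (Fin n) → ℝ} {U : Set (EuclideanSpace ℝ (Fin n))}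
    (hU : IsOpen U) (hf : ∀ x ∈ U, DifferentiableAt ℝ f x) (hg : ∀ x ∈ U, DifferentiableAt ℝ g x)
    {x : EuclideanSpace ℝ (Fin n)} (hx : x ∈ U) :
    (fun y => fderiv ℝ (fun z => f z + g z) y) =ᶠ[𝓝 x] (fun y => fderiv ℝ f y + fderiv ℝ g y) := by
  filter_upwards [hU.mem_nhds hx] with y hy
  exact fderiv_fun_add (hf y hy) (hg y hy)

lemma SubH.add_lap {n : ℕ} {f g : EuclideanSpace ℝ (Fin n) → ℝ} {U : Set (EuclideanSpace ℝ (Fin n))}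
    (hU : IsOpen U) (hf1 : ∀ x ∈ U, DifferentiableAt ℝ f x)
    (hf2 : ∀ x ∈ U, DifferentiableAt ℝ (fun y => fderiv ℝ f y) x)
    (hg1 : ∀ x ∈ U, DifferentiableAt ℝ g x)
    (hg2 : ∀ x ∈ U, DifferentiableAt ℝ (fun y => fderiv ℝ g y) x) :
    (∀ x ∈ U, DifferentiableAt ℝ (fun z => f z + g z) x) ∧
    (∀ x ∈ U, DifferentiableAt ℝ (fun y => fderiv ℝ (fun z => f z + g z) y) x) ∧
    ∀ x ∈ U, laplacian (fun z => f z + g z) x = laplacian f x + laplacian g x := by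
  have h2 : ∀ x ∈ U, DifferentiableAt ℝ (fun y => fderiv ℝ (fun z => f z + g z) y) x := by
    intro x hx
    have := (hf2 x hx).add (hg2 x hx)
    exact this.congr_of_eventuallyEq (fderiv_add_ev hU hf1 hg1 hx)
  refine ⟨fun x hx => (hf1 x hx).add (hg1 x hx), h2, fun x hx => ?_⟩
  rw [lap_eq (h2 x hx), lap_eq (hf2 x hx), lap_eq (hg2 x hx), ← Finset.sum_add_distrib,
    (fderiv_add_ev hU hf1 hg1 hx).fderiv_eq, fderiv_fun_add (hf2 x hx) (hg2 x hx)]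
  simp

lemma SubH.add {n : ℕ} {f g : EuclideanSpace ℝ (Fin n) → ℝ} {U : Set (EuclideanSpace ℝ (Fin n))}
    (hU : IsOpen U) (hf : SubH f U) (hg : SubH g U) : SubH (fun z => f z + g z) U := by
  obtain ⟨h1, h2, h3⟩ := SubH.add_lap hU hf.d1 hf.d2 hg.d1 hg.d2
  exact ⟨h1, h2, fun x hx => by rw [h3 x hx]; exact add_nonneg (hf.lap x hx) (hg.lap x hx)⟩

/-- affine reparametrisation -/
lemma SubH.comp_affine {n : ℕ} {f : EuclideanSpace ℝ (Fin n) → ℝ}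
    {U V : Set (EuclideanSpace ℝ (Fin n))} (hf : SubH f U) (a : EuclideanSpace ℝ (Fin n)) (s : ℝ)
    (hV : IsOpen V) (hUV : ∀ y ∈ V, a + s • y ∈ U) : SubH (fun y => f (a + s • y)) V := by
  have key : ∀ y ∈ V, HasFDerivAt (fun y => f (a + s • y)) (s • fderiv ℝ f (a + s • y)) y := by
    intro y hy
    have h1 := (hf.d1 _ (hUV y hy)).hasFDerivAt
    have h2 : HasFDerivAt (fun y : EuclideanSpace ℝ (Fin n) => a + s • y)
      (s • ContinuousLinearMap.id ℝ (EuclideanSpace ℝ (Fin n))) y :=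
      ((hasFDerivAt_id y).const_smul s).const_add a
    have h3 := h1.comp y h2
    refine h3.congr_fderiv ?_
    ext v; simp
  have ev : ∀ y ∈ V, (fun y => fderiv ℝ (fun y => f (a + s • y)) y) =ᶠ[𝓝 y]
      (fun y => s • fderiv ℝ f (a + s • y)) := by
    intro y hy
    filter_upwards [hV.mem_nhds hy] with z hz using (key z hz).fderiv
  have key2 : ∀ y ∈ V, HasFDerivAt (fun y => fderiv ℝ (fun y => f (a + s • y)) y)
      (s • ((fderiv ℝ (fun y => fderiv ℝ f y) (a + s • y)).comp
        (s • ContinuousLinearMap.id ℝ (EuclideanSpace ℝ (Fin n))))) y := by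
    intro y hy
    have h1 := (hf.d2 _ (hUV y hy)).hasFDerivAt
    have h2 : HasFDerivAt (fun y : EuclideanSpace ℝ (Fin n) => a + s • y)
      (s • ContinuousLinearMap.id ℝ (EuclideanSpace ℝ (Fin n))) y :=
      ((hasFDerivAt_id y).const_smul s).const_add a
    have h3 := (h1.comp y h2).const_smul s
    exact h3.congr_of_eventuallyEq (ev y hy)
  refine ⟨fun y hy => (key y hy).differentiableAt, fun y hy => (key2 y hy).differentiableAt,
    fun y hy => ?_⟩
  rw [lap_eq (key2 y hy).differentiableAt, (key2 y hy).fderiv]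
  have h := hf.lap _ (hUV y hy)
  rw [lap_eq (hf.d2 _ (hUV y hy))] at h
  have : ∑ i : Fin n, ((s • ((fderiv ℝ (fun y => fderiv ℝ f y) (a + s • y)).comp
        (s • ContinuousLinearMap.id ℝ (EuclideanSpace ℝ (Fin n)))))
      (EuclideanSpace.single i (1 : ℝ))) (EuclideanSpace.single i (1 : ℝ)) =
      s ^ 2 * ∑ i : Fin n, (fderiv ℝ (fun y => fderiv ℝ f y) (a + s • y)
      (EuclideanSpace.single i (1 : ℝ))) (EuclideanSpace.single i (1 : ℝ)) := by
    rw [Finset.mul_sum]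
    refine Finset.sum_congr rfl fun i _ => ?_
    simp; ring
  rw [this]
  positivity

lemma SubH.const_mul {n : ℕ} {f : EuclideanSpace ℝ (Fin n) → ℝ}
    {U : Set (EuclideanSpace ℝ (Fin n))} (hf : SubH f U) {c : ℝ} (hc : 0 ≤ c) :
    SubH (fun y => c * f y) U := by
  have e : (fun y => fderiv ℝ (fun y => c * f y) y) = fun y => c • fderiv ℝ f y := by
    funext y
    exact fderiv_const_smul_field (𝕜 := ℝ) (R := ℝ) (f := f) c |> congrFun <| y
  have h2 : ∀ x ∈ U, DifferentiableAt ℝ (fun y => fderiv ℝ (fun y => c * f y) y) x := by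
    intro x hx; rw [e]; exact (hf.d2 x hx).const_smul c
  refine ⟨fun x hx => (hf.d1 x hx).const_mul c, h2, fun x hx => ?_⟩
  rw [lap_eq (h2 x hx), e, fderiv_fun_const_smul (hf.d2 x hx)]
  have h := hf.lap x hx
  rw [lap_eq (hf.d2 x hx)] at h
  simp only [smul_apply, smul_eq_mul, ← Finset.mul_sum]
  positivity

/-- quadratic functions -/
lemma quad_lap {n : ℕ} (ν : EuclideanSpace ℝ (Fin n)) (a b d : ℝ) :
    (∀ x, DifferentiableAt ℝ (fun y : EuclideanSpace ℝ (Fin n) =>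
      a * (inner ℝ ν y) ^ 2 + b * (inner ℝ y y) + d * inner ℝ ν y) x) ∧
    (∀ x, DifferentiableAt ℝ (fun z => fderiv ℝ (fun y : EuclideanSpace ℝ (Fin n) =>
      a * (inner ℝ ν y) ^ 2 + b * (inner ℝ y y) + d * inner ℝ ν y) z) x) ∧
    ∀ x, laplacian (fun y : EuclideanSpace ℝ (Fin n) =>
      a * (inner ℝ ν y) ^ 2 + b * (inner ℝ y y) + d * inner ℝ ν y) x
      = 2 * a * ‖ν‖ ^ 2 + 2 * n * b := by
  set F := (fun y : EuclideanSpace ℝ (Fin n) =>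
      a * (inner ℝ ν y) ^ 2 + b * (inner ℝ y y) + d * inner ℝ ν y) with hF
  have hc : ContDiff ℝ 2 F := by
    have hi : ContDiff ℝ 2 (fun y : EuclideanSpace ℝ (Fin n) => inner ℝ ν y) :=
      contDiff_const.inner ℝ contDiff_id
    have hs : ContDiff ℝ 2 (fun y : EuclideanSpace ℝ (Fin n) => inner ℝ y y) :=
      contDiff_id.inner ℝ contDiff_id
    exact ((contDiff_const.mul (hi.pow 2)).add (contDiff_const.mul hs)).add (contDiff_const.mul hi)
  have h2 : Differentiable ℝ (fun z => fderiv ℝ F z) :=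
    (hc.fderiv_right (m := 1) (by norm_num)).differentiable (by norm_num)
  refine ⟨fun x => (hc.differentiable (by norm_num)) x, fun x => h2 x, fun x => ?_⟩
  have e : ∀ v y, fderiv ℝ F y v = 2 * a * inner ℝ ν y * inner ℝ ν v + 2 * b * inner ℝ y v
      + d * inner ℝ ν v := by
    intro v y
    have hi : HasFDerivAt (fun y : EuclideanSpace ℝ (Fin n) => inner ℝ ν y) (innerSL ℝ ν) y :=
      (innerSL ℝ ν).hasFDerivAt
    have hs := (hasFDerivAt_id y).inner ℝ (hasFDerivAt_id y)
    have h := (((hi.pow 2).const_mul a).add (hs.const_mul b)).add (hi.const_mul d)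
    have h' : HasFDerivAt F _ y := h
    rw [h'.fderiv]
    simp [real_inner_comm v y]
    ring
  unfold laplacian
  have : ∀ i : Fin n, fderiv ℝ (fun y => fderiv ℝ F y (EuclideanSpace.single i (1 : ℝ))) x
      (EuclideanSpace.single i (1 : ℝ)) = 2 * a * (ν i) ^ 2 + 2 * b := by
    intro i
    have hh : (fun y => fderiv ℝ F y (EuclideanSpace.single i (1 : ℝ))) =
      fun y : EuclideanSpace ℝ (Fin n) => 2 * a * ν i * inner ℝ ν y
        + 2 * b * inner ℝ (EuclideanSpace.single i (1 : ℝ)) y + d * ν i := by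
      funext y; rw [e]; simp [EuclideanSpace.inner_single_right, EuclideanSpace.inner_single_left]; ring
    rw [hh]
    have h1 : HasFDerivAt (fun y : EuclideanSpace ℝ (Fin n) => inner ℝ ν y) (innerSL ℝ ν) x :=
      (innerSL ℝ ν).hasFDerivAt
    have h2 : HasFDerivAt (fun y : EuclideanSpace ℝ (Fin n) =>
        inner ℝ (EuclideanSpace.single i (1 : ℝ)) y) (innerSL ℝ (EuclideanSpace.single i (1 : ℝ))) x :=
      (innerSL ℝ (EuclideanSpace.single i (1 : ℝ))).hasFDerivAt
    have h := ((h1.const_mul (2 * a * ν i)).add (h2.const_mul (2 * b))).add_const (d * ν i)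
    have h' : HasFDerivAt (fun y : EuclideanSpace ℝ (Fin n) => 2 * a * ν i * inner ℝ ν y
        + 2 * b * inner ℝ (EuclideanSpace.single i (1 : ℝ)) y + d * ν i) _ x := h
    rw [h'.fderiv]
    simp [EuclideanSpace.inner_single_right, EuclideanSpace.inner_single_left]
    ring
  rw [Finset.sum_congr rfl fun i _ => this i, Finset.sum_add_distrib, ← Finset.mul_sum,
    EuclideanSpace.norm_sq_eq]
  simp
  ring

lemma quad_subH {n : ℕ} (ν : EuclideanSpace ℝ (Fin n)) (a b d : ℝ)
    (h : 0 ≤ 2 * a * ‖ν‖ ^ 2 + 2 * n * b) (U : Set (EuclideanSpace ℝ (Fin n))) :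
    SubH (fun y : EuclideanSpace ℝ (Fin n) =>
      a * (inner ℝ ν y) ^ 2 + b * (inner ℝ y y) + d * inner ℝ ν y) U := by
  obtain ⟨h1, h2, h3⟩ := quad_lap ν a b d
  exact ⟨fun x _ => h1 x, fun x _ => h2 x, fun x _ => by rw [h3 x]; exact h⟩

/-- second derivative test -/
lemma lap_nonpos_of_localMax {n : ℕ} {G : EuclideanSpace ℝ (Fin n) → ℝ}
    {U : Set (EuclideanSpace ℝ (Fin n))} (hU : IsOpen U)
    (h1 : ∀ x ∈ U, DifferentiableAt ℝ G x)
    (h2 : ∀ x ∈ U, DifferentiableAt ℝ (fun y => fderiv ℝ G y) x)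
    {x : EuclideanSpace ℝ (Fin n)} (hx : x ∈ U) (hm : IsLocalMax G x) : laplacian G x ≤ 0 := by
  unfold laplacian
  refine Finset.sum_nonpos fun i _ => ?_
  set e : EuclideanSpace ℝ (Fin n) := EuclideanSpace.single i (1 : ℝ)
  by_contra! hpos
  have hline : ∀ t : ℝ, HasDerivAt (fun t : ℝ => x + t • e) e t := by
    intro t
    simpa using ((hasDerivAt_id t).smul_const e).const_add x
  have hcont : Continuous (fun t : ℝ => x + t • e) := by fun_prop
  have hU' : ∀ᶠ t in 𝓝 (0 : ℝ), x + t • e ∈ U := by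
    apply hcont.continuousAt.eventually_mem
    simpa using hU.mem_nhds hx
  have hd1 : deriv (fun t : ℝ => G (x + t • e)) =ᶠ[𝓝 0] fun t => fderiv ℝ G (x + t • e) e := by
    filter_upwards [hU'] with t ht
    exact ((h1 _ ht).hasFDerivAt.comp_hasDerivAt t (hline t)).deriv
  have hd2 : HasDerivAt (deriv (fun t : ℝ => G (x + t • e)))
      (fderiv ℝ (fun y => fderiv ℝ G y e) x e) 0 := by
    have hA : DifferentiableAt ℝ (fun y => fderiv ℝ G y e) (x + (0 : ℝ) • e) := by
      simpa using (h2 x hx).clm_apply (differentiableAt_const e)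
    have := (hA.hasFDerivAt.comp_hasDerivAt 0 (hline 0)).congr_of_eventuallyEq hd1
    simpa using this
  have hmax : IsLocalMax (fun t : ℝ => G (x + t • e)) 0 := by
    have h0 : Tendsto (fun t : ℝ => x + t • e) (𝓝 0) (𝓝 x) := by
      simpa using hcont.tendsto 0
    have := h0.eventually hm
    filter_upwards [this] with t ht
    simpa using ht
  have hmin : IsLocalMin (fun t : ℝ => G (x + t • e)) 0 := by
    apply isLocalMin_of_deriv_deriv_pos
    · rw [hd2.deriv]; exact hpos
    · exact hmax.deriv_eq_zero
    · have : DifferentiableAt ℝ G (x + (0 : ℝ) • e) := by simpa using h1 x hx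
      exact (this.continuousAt).comp (f := fun t : ℝ => x + t • e) hcont.continuousAt
  have hconst : (fun t : ℝ => G (x + t • e)) =ᶠ[𝓝 0] fun _ => G x := by
    filter_upwards [hmax, hmin] with t a b
    simp at a b; exact le_antisymm a b
  have : deriv (deriv (fun t : ℝ => G (x + t • e))) 0 = 0 := by
    rw [hconst.deriv.deriv_eq]
    simp
  rw [hd2.deriv] at this
  linarith

lemma max_principle {n : ℕ} (hn : 0 < n) {F : EuclideanSpace ℝ (Fin n) → ℝ}
    (hc : ContinuousOn F (Metric.closedBall 0 1)) (hF : SubH F (Metric.ball 0 1)) {c : ℝ}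
    (hb : ∀ x ∈ Metric.sphere (0 : EuclideanSpace ℝ (Fin n)) 1, F x ≤ c) : F 0 ≤ c := by
  refine le_of_forall_pos_le_add fun ε hε => ?_
  set Q := (fun y : EuclideanSpace ℝ (Fin n) =>
      (0:ℝ) * (inner ℝ (0 : EuclideanSpace ℝ (Fin n)) y) ^ 2 + ε * (inner ℝ y y)
        + (0:ℝ) * inner ℝ (0 : EuclideanSpace ℝ (Fin n)) y) with hQ
  obtain ⟨q1, q2, q3⟩ := quad_lap (0 : EuclideanSpace ℝ (Fin n)) 0 ε 0
  obtain ⟨g1, g2, g3⟩ := SubH.add_lap Metric.isOpen_ball hF.d1 hF.d2 (fun x _ => q1 x)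
    (fun x _ => q2 x)
  have hQ' : ∀ y, Q y = ε * ‖y‖ ^ 2 := by
    intro y; rw [hQ]; simp
  have hQc : Continuous Q := by
    rw [funext hQ']; fun_prop
  obtain ⟨x, hx, hmax⟩ := (isCompact_closedBall (0 : EuclideanSpace ℝ (Fin n)) 1).exists_isMaxOn
    ⟨0, by simp⟩ (hc.add hQc.continuousOn)
  have h0 : F 0 + Q 0 ≤ F x + Q x := hmax (by simp : (0 : EuclideanSpace ℝ (Fin n)) ∈ Metric.closedBall 0 1)
  rw [hQ' 0, hQ' x] at h0
  simp at hx
  rcases hx.lt_or_eq with h | h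
  · exfalso
    have hxb : x ∈ Metric.ball (0 : EuclideanSpace ℝ (Fin n)) 1 := by simpa using h
    have hloc : IsLocalMax (fun z => F z + Q z) x :=
      hmax.isLocalMax (Filter.mem_of_superset (Metric.isOpen_ball.mem_nhds hxb)
        Metric.ball_subset_closedBall)
    have := lap_nonpos_of_localMax Metric.isOpen_ball g1 g2 hxb hloc
    rw [g3 x hxb, q3 x] at this
    have := hF.lap x hxb
    have : (0:ℝ) < n := by exact_mod_cast hn
    have : 0 < n * ε := by positivity
    simp at *
    linarith
  · have := hb x (by simpa using h)
    rw [h] at h0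
    simp at h0
    linarith

end HH

namespace HH

open Set Filter Topology CompactlySupported

abbrev Eu (n : ℕ) := EuclideanSpace ℝ (Fin n)

abbrev Sp (n : ℕ) := Metric.sphere (0 : Eu n) 1

lemma exists_kernel {n : ℕ} (hn : 0 < n) :
    ∃ μ : Measure (Sp n), IsProbabilityMeasure μ ∧
      (∀ F : Eu n → ℝ, ContinuousOn F (Metric.closedBall 0 1) →
        SubH F (Metric.ball 0 1) → F 0 ≤ ∫ w, F w ∂μ) := by
  have : CompactSpace (Sp n) := isCompact_iff_compactSpace.mp (isCompact_sphere _ _)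
  let T : PointedCone ℝ C_c((Sp n), ℝ) :=
    { carrier := {φ | ∃ F : (Eu n) → ℝ, ContinuousOn F (Metric.closedBall 0 1) ∧
        SubH F (Metric.ball 0 1) ∧ 0 ≤ F 0 ∧ ∀ w : (Sp n), F w ≤ φ w}
      add_mem' := by
        rintro a b ⟨F, h1, h2, h3, h4⟩ ⟨G, g1, g2, g3, g4⟩
        exact ⟨fun z => F z + G z, h1.add g1, h2.add Metric.isOpen_ball g2, add_nonneg h3 g3,
          fun w => add_le_add (h4 w) (g4 w)⟩
      zero_mem' := by
        refine ⟨fun _ => 0, continuousOn_const, ?_, le_rfl, fun w => le_rfl⟩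
        simpa using quad_subH (0 : (Eu n)) 0 0 0 (by simp) (Metric.ball 0 1)
      smul_mem' := by
        rintro ⟨c, hc⟩ a ⟨F, h1, h2, h3, h4⟩
        exact ⟨fun z => c * F z, continuousOn_const.mul h1, h2.const_mul hc, mul_nonneg hc h3,
          fun w => mul_le_mul_of_nonneg_left (h4 w) hc⟩ }
  let one : C_c((Sp n), ℝ) := CompactlySupportedContinuousMap.continuousMapEquiv (ContinuousMap.const (Sp n) (1:ℝ))
  have one_apply : ∀ w, one w = 1 := fun w => rfl
  have hne : Nonempty (Sp n) := by
    refine ⟨⟨EuclideanSpace.single ⟨0, hn⟩ (1:ℝ), by simp⟩⟩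
  have hone : one ≠ 0 := by
    intro h
    obtain ⟨w⟩ := hne
    have := one_apply w
    rw [h] at this
    simp at this
  let p : C_c((Sp n), ℝ) →ₗ.[ℝ] ℝ := LinearPMap.mkSpanSingleton one (1:ℝ) hone
  have hconst : ∀ c : ℝ, SubH (fun _ : (Eu n) => c) (Metric.ball 0 1) := by
    intro c
    refine ⟨fun x _ => differentiableAt_const _, fun x _ => ?_, fun x _ => ?_⟩
    · simp
    · simp [laplacian]
  have hp : ∀ (c : ℝ) (h : c • one ∈ p.domain), p ⟨c • one, h⟩ = c := by
    intro c h
    have := LinearPMap.mkSpanSingleton'_apply (σ := RingHom.id ℝ) one (1:ℝ)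
      (fun c hc => (smul_eq_zero.1 hc).elim (fun hc => by rw [hc]; simp)
        fun hx' => absurd hx' hone) c h
    simp only [RingHom.id_apply, smul_eq_mul, mul_one] at this
    exact this
  obtain ⟨g, hg1, hg2⟩ := riesz_extension T p (by
      rintro ⟨φ, hφ⟩ hT
      have hφ' := hφ
      obtain ⟨c, rfl⟩ := Submodule.mem_span_singleton.mp (show φ ∈ Submodule.span ℝ {one} from hφ')
      rw [hp c hφ]
      obtain ⟨F, h1, h2, h3, h4⟩ := hT
      refine h3.trans (max_principle hn h1 h2 fun x hx => ?_)
      have := h4 ⟨x, hx⟩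
      simpa [one_apply] using this) (by
      intro φ
      have hb : ∃ C, ∀ w, -C ≤ φ w := by
        obtain ⟨C, hC⟩ := (isCompact_range φ.continuous).isBounded.exists_norm_le
        exact ⟨C, fun w => (abs_le.mp (by simpa using hC (φ w) ⟨w, rfl⟩)).1⟩
      obtain ⟨C, hC⟩ := hb
      refine ⟨⟨C • one, Submodule.mem_span_singleton.mpr ⟨C, rfl⟩⟩, fun _ => 0, continuousOn_const,
        hconst 0, le_rfl, fun w => ?_⟩
      have := hC w
      simp [one_apply]
      linarith)
  have hgone : g one = 1 := by
    have := hg1 ⟨(1:ℝ) • one, Submodule.mem_span_singleton.mpr ⟨1, rfl⟩⟩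
    have h2 := this.trans (hp 1 _)
    simpa using h2
  have hgpos : ∀ φ : C_c((Sp n), ℝ), 0 ≤ φ → 0 ≤ g φ := fun φ hφ =>
    hg2 φ ⟨fun _ => 0, continuousOn_const, hconst 0, le_rfl, fun w => hφ w⟩
  let Λ : C_c((Sp n), ℝ) →ₚ[ℝ] ℝ := PositiveLinearMap.mk₀ g hgpos
  refine ⟨RealRMK.rieszMeasure Λ, ?_, ?_⟩
  · have h1 := RealRMK.integral_rieszMeasure Λ one
    have : Λ one = 1 := hgone
    rw [this] at h1
    simp only [one_apply] at h1
    simp at h1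
    constructor
    rw [Measure.real, ENNReal.toReal_eq_one_iff] at h1
    exact h1
  · intro F hF hS
    let φ : C_c((Sp n), ℝ) := CompactlySupportedContinuousMap.continuousMapEquiv
      ⟨fun w : (Sp n) => F w, (hF.mono Metric.sphere_subset_closedBall).domRestrict⟩
    have hφ : ∀ w, φ w = F w := fun w => rfl
    have h1 := RealRMK.integral_rieszMeasure Λ φ
    simp only [hφ] at h1
    rw [h1]
    have h2 : 0 ≤ g (φ + (-F 0) • one) := by
      refine hg2 _ ⟨fun z => F z + (-F 0), hF.add continuousOn_const,
        hS.add Metric.isOpen_ball (hconst _), by simp, fun w => ?_⟩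
      simp [hφ, one_apply]
    rw [map_add, map_smul, hgone] at h2
    simp at h2
    exact h2

/-- moments of the kernel -/
lemma exists_kernel' {n : ℕ} (hn : 0 < n) :
    ∃ μ : Measure (Sp n), IsProbabilityMeasure μ ∧
      (∀ ν : Eu n, ∫ w : Sp n,
        inner ℝ ν (w : Eu n) ∂μ = 0) ∧
      (∀ ν : Eu n, ‖ν‖ = 1 →
        ∫ w : Sp n,
        (inner ℝ ν (w : Eu n)) ^ 2 ∂μ = 1 / n) ∧
      (∀ (f : Eu n → ℝ) (x : Eu n) (s : ℝ), 0 < s →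
        ContinuousOn f (Metric.closedBall x s) →
        SubH f (Metric.ball x s) →
        f x ≤ ∫ w : Sp n,
          f (x + s • (w : Eu n)) ∂μ) := by
  obtain ⟨μ, hμ, h⟩ := exists_kernel hn
  have : CompactSpace (Sp n) := isCompact_iff_compactSpace.mp (isCompact_sphere _ _)
  have hint : ∀ F : (Eu n) → ℝ, Continuous F → Integrable (fun w : Sp n => F w) μ := by
    intro F hF
    exact (hF.comp continuous_subtype_val).integrable_of_hasCompactSupport
      (HasCompactSupport.of_compactSpace _)
  have hcl : ∀ ν : (Eu n), Continuous (fun y : (Eu n) => inner ℝ ν y) := fun ν => (innerSL ℝ ν).continuous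
  have hcs : Continuous (fun y : (Eu n) => inner ℝ y y) := continuous_id.inner continuous_id
  have quad : ∀ (ν : (Eu n)) (a b d : ℝ), 2 * a * ‖ν‖ ^ 2 + 2 * n * b = 0 →
      0 ≤ a * ∫ w : Sp n, (inner ℝ ν (w : (Eu n))) ^ 2 ∂μ + b
        + d * ∫ w : Sp n, inner ℝ ν (w : (Eu n)) ∂μ := by
    intro ν a b d h0
    have hcc : Continuous (fun y : (Eu n) =>
      a * (inner ℝ ν y) ^ 2 + b * (inner ℝ y y) + d * inner ℝ ν y) := by
      have := hcl ν
      fun_prop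
    have := h _ hcc.continuousOn (quad_subH ν a b d h0.ge _)
    have e : ∀ w : Sp n, a * (inner ℝ ν (w:(Eu n))) ^ 2 + b * (inner ℝ (w:(Eu n)) (w:(Eu n))) +
      d * inner ℝ ν (w:(Eu n)) = a * (inner ℝ ν (w:(Eu n))) ^ 2 + b + d * inner ℝ ν (w:(Eu n)) := by
      intro w
      have : ‖(w:(Eu n))‖ = 1 := by simp
      rw [real_inner_self_eq_norm_sq, this]; ring
    simp only [e] at this
    rw [integral_add, integral_add, integral_const_mul, integral_const_mul] at this
    · simpa using this
    · exact (hint _ ((hcl ν).pow 2)).const_mul a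
    · exact integrable_const b
    · exact ((hint _ ((hcl ν).pow 2)).const_mul a).add (integrable_const b)
    · exact (hint _ (hcl ν)).const_mul d
  refine ⟨μ, hμ, ?_, ?_, ?_⟩
  · intro ν
    have h1 := quad ν 0 0 1 (by simp)
    have h2 := quad ν 0 0 (-1) (by simp)
    simp at h1 h2
    linarith
  · intro ν hν
    have hn' : (n:ℝ) ≠ 0 := by positivity
    have h1 := quad ν 1 (-1/n) 0 (by rw [hν]; field_simp; norm_num)
    have h2 := quad ν (-1) (1/n) 0 (by rw [hν]; field_simp; norm_num)
    have : (-1 / n : ℝ) = - (1/n) := by ring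
    rw [this] at h1
    linarith
  · intro f x s hs hf hS
    have hmap : ∀ y ∈ Metric.closedBall (0:(Eu n)) 1, x + s • y ∈ Metric.closedBall x s := by
      intro y hy
      simp [norm_smul, abs_of_pos hs] at hy ⊢
      nlinarith
    have hmap' : ∀ y ∈ Metric.ball (0:(Eu n)) 1, x + s • y ∈ Metric.ball x s := by
      intro y hy
      simp [norm_smul, abs_of_pos hs] at hy ⊢
      nlinarith
    have := h (fun y => f (x + s • y)) (hf.comp (by fun_prop) hmap)
      (hS.comp_affine x s Metric.isOpen_ball hmap')
    simpa using this

end HH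

namespace HH

open Set Filter Topology

noncomputable def dlt {n : ℕ} (Ω : Set (Eu n)) (x : Eu n) : ℝ := Metric.infDist x Ωᶜ

lemma dlt_nonneg {n : ℕ} (Ω : Set (Eu n)) (x : Eu n) : 0 ≤ dlt Ω x := Metric.infDist_nonneg

lemma dlt_cont {n : ℕ} (Ω : Set (Eu n)) : Continuous (dlt Ω) := Metric.continuous_infDist_pt _

lemma dlt_zero {n : ℕ} {Ω : Set (Eu n)} {x : Eu n} (hx : x ∉ Ω) : dlt Ω x = 0 :=
  Metric.infDist_zero_of_mem hx

lemma compl_nonempty {n : ℕ} (hn : 0 < n) {Ω : Set (Eu n)} (hb : Bornology.IsBounded Ω) :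
    (Ωᶜ).Nonempty := by
  have : Nonempty (Fin n) := ⟨⟨0, hn⟩⟩
  have : Nontrivial (Eu n) := by
    unfold Eu
    infer_instance
  by_contra h
  rw [not_nonempty_iff_eq_empty, compl_empty_iff] at h
  rw [h] at hb
  exact NormedSpace.unbounded_univ ℝ (Eu n) hb

lemma sep {n : ℕ} {Ω : Set (Eu n)} (ho : IsOpen Ω) (hc : Convex ℝ Ω) (hne : Ω.Nonempty)
    {p : Eu n} (hp : p ∉ Ω) : ∃ ν : Eu n, ‖ν‖ = 1 ∧ ∀ y ∈ Ω, inner ℝ ν y < inner ℝ ν p := by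
  obtain ⟨F, hF⟩ := geometric_hahn_banach_open_point hc ho hp
  obtain ⟨y0, hy0⟩ := hne
  set v := (InnerProductSpace.toDual ℝ (Eu n)).symm F with hv
  have hv' : ∀ y, inner ℝ v y = F y := fun y => by simp [hv]
  have hv0 : v ≠ 0 := by
    intro h
    have := hF y0 hy0
    rw [← hv', ← hv', h] at this
    simp at this
  have hpos : 0 < ‖v‖ := norm_pos_iff.mpr hv0
  refine ⟨‖v‖⁻¹ • v, by rw [norm_smul, norm_inv, norm_norm]; field_simp, fun y hy => ?_⟩
  rw [inner_smul_left, inner_smul_left, hv', hv']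
  simp only [map_inv₀, conj_trivial]
  exact mul_lt_mul_of_pos_left (hF y hy) (by positivity)

lemma dlt_le_of_half {n : ℕ} {Ω : Set (Eu n)} {ν : Eu n} (hν : ‖ν‖ = 1) {b : ℝ}
    (h : ∀ y ∈ Ω, inner ℝ ν y < b) {y : Eu n} (hy : y ∈ Ω) : dlt Ω y ≤ b - inner ℝ ν y := by
  have hz : y + (b - inner ℝ ν y) • ν ∉ Ω := by
    intro hz
    have := h _ hz
    rw [inner_add_right, inner_smul_right, real_inner_self_eq_norm_sq, hν] at this
    linarith
  have h1 : dlt Ω y ≤ dist y (y + (b - inner ℝ ν y) • ν) := Metric.infDist_le_dist_of_mem hz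
  rw [dist_self_add_right, norm_smul, hν, mul_one, Real.norm_eq_abs,
    abs_of_pos (by linarith [h y hy])] at h1
  exact h1

lemma exists_normal {n : ℕ} (hn : 0 < n) {Ω : Set (Eu n)} (ho : IsOpen Ω) (hc : Convex ℝ Ω)
    (hne : Ω.Nonempty) (hb : Bornology.IsBounded Ω) (x : Eu n) :
    ∃ ν : Eu n, ‖ν‖ = 1 ∧ ∀ y ∈ Ω, inner ℝ ν y < inner ℝ ν x + dlt Ω x := by
  obtain ⟨p, hp, hd⟩ := ho.isClosed_compl.exists_infDist_eq_dist (compl_nonempty hn hb) x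
  obtain ⟨ν, hν, h⟩ := sep ho hc hne hp
  refine ⟨ν, hν, fun y hy => (h y hy).trans_le ?_⟩
  have h1 : inner ℝ ν (p - x) ≤ ‖ν‖ * ‖p - x‖ := real_inner_le_norm _ _
  rw [hν, one_mul, inner_sub_right, ← dist_eq_norm, dist_comm, ← hd] at h1
  unfold dlt
  linarith

lemma dlt_ball {n : ℕ} {Ω : Set (Eu n)} {x : Eu n} {s : ℝ} (hs : s < dlt Ω x) :
    Metric.closedBall x s ⊆ Ω := by
  intro y hy
  by_contra h
  have : dlt Ω x ≤ dist x y := Metric.infDist_le_dist_of_mem h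
  rw [Metric.mem_closedBall, dist_comm] at hy
  linarith

noncomputable def Gf (K η T t : ℝ) : ℝ := K / 2 * (max (t - η) 0) ^ 2 - (K + 1) / 2 * (max (t - T) 0) ^ 2

noncomputable def Gd (K η T t : ℝ) : ℝ := K * max (t - η) 0 - (K + 1) * max (t - T) 0

lemma pos_sq_upper (a b : ℝ) : (max (a + b) 0) ^ 2 ≤ (max a 0) ^ 2 + 2 * max a 0 * b + b ^ 2 := by
  rcases le_total a 0 with h | h <;> rcases le_total (a + b) 0 with h' | h' <;>
    simp only [max_eq_left, max_eq_right, h, h'] <;> nlinarith [sq_nonneg (a + b)]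

lemma pos_sq_lower (a b : ℝ) : (max a 0) ^ 2 + 2 * max a 0 * b ≤ (max (a + b) 0) ^ 2 := by
  rcases le_total a 0 with h | h <;> rcases le_total (a + b) 0 with h' | h' <;>
    simp only [max_eq_left, max_eq_right, h, h'] <;> nlinarith [sq_nonneg (a + b), sq_nonneg b]

lemma G_taylor {K η T : ℝ} (hK : 0 ≤ K) (t b : ℝ) :
    Gf K η T (t + b) ≤ Gf K η T t + Gd K η T t * b + K / 2 * b ^ 2 := by
  unfold Gf Gd
  have h1 := mul_le_mul_of_nonneg_left (pos_sq_upper (t - η) b) (by positivity : 0 ≤ K / 2)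
  have h2 := mul_le_mul_of_nonneg_left (pos_sq_lower (t - T) b) (by positivity : 0 ≤ (K + 1) / 2)
  have e1 : t + b - η = t - η + b := by ring
  have e2 : t + b - T = t - T + b := by ring
  rw [e1, e2]
  nlinarith

lemma G_taylor2 {K η T : ℝ} (hηT : η ≤ T) {t b : ℝ} (hb : |b| ≤ t - T) :
    Gf K η T (t + b) = Gf K η T t + Gd K η T t * b + (-1) / 2 * b ^ 2 := by
  unfold Gf Gd
  have := abs_le.mp hb
  have := abs_nonneg b
  rw [max_eq_left (by linarith), max_eq_left (by linarith), max_eq_left (by linarith),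
    max_eq_left (by linarith)]
  ring

lemma G_zero {K η T t : ℝ} (hηT : η ≤ T) (ht : t ≤ η) : Gf K η T t = 0 := by
  unfold Gf
  rw [max_eq_right (by linarith), max_eq_right (by linarith)]
  simp

lemma G_mono {K η T r : ℝ} (hηT : η ≤ T) (hK : 0 ≤ K) (hKr : K * (T - η) = r) {t1 t2 : ℝ}
    (h12 : t1 ≤ t2) (h2 : t2 ≤ T + r) : Gf K η T t1 ≤ Gf K η T t2 := by
  have low : ∀ a b, a ≤ b → b ≤ T → Gf K η T a ≤ Gf K η T b := by
    intro a b hab hbT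
    unfold Gf
    rw [max_eq_right (by linarith : a - T ≤ 0), max_eq_right (by linarith : b - T ≤ 0)]
    have : max (a - η) 0 ≤ max (b - η) 0 := max_le_max (by linarith) le_rfl
    have h0 : 0 ≤ max (a - η) 0 := le_max_right _ _
    have := pow_le_pow_left₀ h0 this 2
    have := mul_le_mul_of_nonneg_left this (by positivity : 0 ≤ K / 2)
    linarith
  have high : ∀ a b, T ≤ a → a ≤ b → b ≤ T + r → Gf K η T a ≤ Gf K η T b := by
    intro a b hTa hab hb
    unfold Gf
    rw [max_eq_left (by linarith : 0 ≤ a - T), max_eq_left (by linarith : 0 ≤ b - T),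
      max_eq_left (by linarith : 0 ≤ a - η), max_eq_left (by linarith : 0 ≤ b - η)]
    have : 0 ≤ (b - a) * (r - (a + b - 2 * T) / 2) := mul_nonneg (by linarith) (by linarith)
    rw [← hKr] at this
    nlinarith
  rcases le_total t2 T with h | h
  · exact low _ _ h12 h
  · rcases le_total t1 T with h' | h'
    · exact (low _ _ h' le_rfl).trans (high _ _ le_rfl h h2)
    · exact high _ _ h' h12 h2

lemma G_cont (K η T : ℝ) : Continuous (Gf K η T) := by
  unfold Gf; fun_prop

lemma key_ineq {n : ℕ} (hn : 0 < n) {Ω : Set (Eu n)} (ho : IsOpen Ω) (hc : Convex ℝ Ω)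
    (hne : Ω.Nonempty) (hb : Bornology.IsBounded Ω) {f : Eu n → ℝ}
    (hfc : ContinuousOn f (closure Ω)) (hf0 : ∀ x ∈ Ω, 0 ≤ f x) (hS : SubH f Ω)
    {r : ℝ} (hr : ∀ x, dlt Ω x ≤ r) (hr0 : 0 ≤ r) {s ε : ℝ} (hs : 0 < s) (hε : 0 < ε) :
    ∫ x in Ω ∩ {x | ε + 3 * s ≤ dlt Ω x}, f x ≤
      (r / ε) * ∫ x in Ω ∩ {x | dlt Ω x < ε + 3 * s}, f x := by
  obtain ⟨μ, hμ, m1, m2, mv⟩ := exists_kernel' hn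
  set η := 2 * s with hη
  set T := η + ε with hT
  set K := r / ε with hK
  have hK0 : 0 ≤ K := by positivity
  have hKr : K * (T - η) = r := by rw [hK, hT]; field_simp; ring
  have hηT : η ≤ T := by linarith
  set u : Eu n → ℝ := fun x => Gf K η T (dlt Ω x) with hu
  have hu0 : ∀ x, 0 ≤ u x := fun x => by
    have := G_mono hηT hK0 hKr (t1 := min (dlt Ω x) η) (t2 := dlt Ω x) (min_le_left _ _)
      (by linarith [hr x])
    rwa [G_zero hηT (min_le_right _ _)] at this
  have huΩ : ∀ x ∉ Ω, u x = 0 := fun x hx => by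
    rw [hu]; simp only; rw [dlt_zero hx]; exact G_zero hηT (by positivity)
  have huc : Continuous u := (G_cont K η T).comp (dlt_cont Ω)
  have hcomp : IsCompact (closure Ω) := hb.isCompact_closure
  have hvol : volume Ω < ⊤ := hb.measure_lt_top
  obtain ⟨M, hM⟩ := hcomp.exists_bound_of_continuousOn hfc
  have hM0 : 0 ≤ M := by
    obtain ⟨x, hx⟩ := hne
    exact (norm_nonneg _).trans (hM x (subset_closure hx))
  obtain ⟨Mu, hMu⟩ := hcomp.exists_bound_of_continuousOn huc.continuousOn
  have hMu0 : 0 ≤ Mu := by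
    obtain ⟨x, hx⟩ := hne
    exact (norm_nonneg _).trans (hMu x (subset_closure hx))
  have hMu' : ∀ x, ‖u x‖ ≤ Mu := by
    intro x
    by_cases hx : x ∈ Ω
    · exact hMu x (subset_closure hx)
    · rw [huΩ x hx]; simpa using hMu0
  set F0 : Eu n → ℝ := Ω.indicator f with hF0
  have hF0m : Measurable F0 := by
    classical
    rw [hF0, ← Set.piecewise_eq_indicator]
    exact (hfc.mono subset_closure).measurable_piecewise continuousOn_const ho.measurableSet
  have hF00 : ∀ x, 0 ≤ F0 x := fun x => indicator_nonneg hf0 x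
  have hF0M : ∀ x, ‖F0 x‖ ≤ M := by
    intro x
    by_cases hx : x ∈ Ω
    · rw [hF0, indicator_of_mem hx]; exact hM x (subset_closure hx)
    · rw [hF0, indicator_of_notMem hx]; simpa using hM0
  have hdom : Integrable (fun x : Eu n => Ω.indicator (fun _ => Mu * M) x) volume := by
    rw [integrable_indicator_iff ho.measurableSet]
    exact integrableOn_const hvol.ne
  have hdom2 : Integrable (fun z : Eu n × Sp n => Ω.indicator (fun _ => Mu * M) z.1)
      (volume.prod μ) := hdom.comp_fst μ
  have hI1 : Integrable (fun z : Eu n × Sp n => u z.1 * F0 (z.1 + s • (z.2 : Eu n)))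
      (volume.prod μ) := by
    refine hdom2.mono' ?_ (Eventually.of_forall fun z => ?_)
    · exact ((huc.measurable.comp measurable_fst).mul
        (hF0m.comp (by fun_prop))).aestronglyMeasurable
    · by_cases hz : z.1 ∈ Ω
      · simp only [indicator_of_mem hz]
        rw [norm_mul]
        exact mul_le_mul (hMu' _) (hF0M _) (norm_nonneg _) hMu0
      · rw [huΩ _ hz, indicator_of_notMem hz]; simp
  have hI2 : Integrable (fun z : Eu n × Sp n => u (z.1 - s • (z.2 : Eu n)) * F0 z.1)
      (volume.prod μ) := by
    refine hdom2.mono' ?_ (Eventually.of_forall fun z => ?_)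
    · exact ((huc.measurable.comp (by fun_prop)).mul
        (hF0m.comp measurable_fst)).aestronglyMeasurable
    · by_cases hz : z.1 ∈ Ω
      · simp only [indicator_of_mem hz]
        rw [norm_mul]
        exact mul_le_mul (hMu' _) (hF0M _) (norm_nonneg _) hMu0
      · rw [hF0, indicator_of_notMem hz, indicator_of_notMem hz]; simp
  have hswap : ∫ x, ∫ w, u x * F0 (x + s • (w : Eu n)) ∂μ =
      ∫ x, ∫ w, u (x - s • (w : Eu n)) * F0 x ∂μ := by
    have q1 := integral_integral_swap (f := fun (x : Eu n) (w : Sp n) => u x * F0 (x + s • (w : Eu n))) hI1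
    have q2 := integral_integral_swap (f := fun (x : Eu n) (w : Sp n) => u (x - s • (w : Eu n)) * F0 x) hI2
    rw [q1, q2]
    congr 1
    funext w
    rw [← integral_sub_right_eq_self (fun x => u x * F0 (x + s • (w : Eu n))) (s • (w : Eu n))]
    simp
  have hIuF : Integrable (fun x => u x * F0 x) volume := by
    refine hdom.mono' (huc.measurable.mul hF0m).aestronglyMeasurable (Eventually.of_forall fun z => ?_)
    by_cases hz : z ∈ Ω
    · simp only [indicator_of_mem hz]
      rw [norm_mul]
      exact mul_le_mul (hMu' _) (hF0M _) (norm_nonneg _) hMu0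
    · rw [huΩ _ hz, indicator_of_notMem hz]; simp
  have hle1 : ∫ x, u x * F0 x ≤ ∫ x, ∫ w, u x * F0 (x + s • (w : Eu n)) ∂μ := by
    refine integral_mono hIuF hI1.integral_prod_left fun x => ?_
    simp only
    rw [integral_const_mul]
    rcases (hu0 x).eq_or_lt with h | h
    · rw [← h]; simp
    · refine mul_le_mul_of_nonneg_left ?_ (hu0 x)
      have hx : s < dlt Ω x := by
        by_contra hx
        rw [hu] at h; simp only at h
        rw [G_zero hηT (by linarith)] at h
        exact lt_irrefl _ h
      have hsub := dlt_ball hx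
      have hxΩ : x ∈ Ω := hsub (Metric.mem_closedBall_self hs.le)
      have := mv f x s hs (hfc.mono (hsub.trans subset_closure))
        ⟨fun y hy => hS.d1 y (hsub (Metric.ball_subset_closedBall hy)),
         fun y hy => hS.d2 y (hsub (Metric.ball_subset_closedBall hy)),
         fun y hy => hS.lap y (hsub (Metric.ball_subset_closedBall hy))⟩
      rw [hF0, indicator_of_mem hxΩ]
      refine this.trans (le_of_eq ?_)
      congr 1
      funext w
      have hw : ‖(w : Eu n)‖ = 1 := by simp
      rw [indicator_of_mem]
      apply hsub
      simp [norm_smul, abs_of_pos hs]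
  classical
  set gb : ℝ → ℝ := fun t => if ε + 3 * s ≤ t then -1 else K with hgb
  have hTs : ε + 3 * s = T + s := by rw [hT, hη]; ring
  have hgbm : Measurable gb := Measurable.ite measurableSet_Ici measurable_const measurable_const
  have hIg : Integrable (fun x => F0 x * gb (dlt Ω x)) volume := by
    have hd2 : Integrable (fun x : Eu n => Ω.indicator (fun _ => M * (1 + K)) x) volume := by
      rw [integrable_indicator_iff ho.measurableSet]
      exact integrableOn_const hvol.ne
    refine hd2.mono' (hF0m.mul (hgbm.comp (dlt_cont Ω).measurable)).aestronglyMeasurable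
      (Eventually.of_forall fun z => ?_)
    by_cases hz : z ∈ Ω
    · simp only [indicator_of_mem hz]
      rw [norm_mul]
      refine mul_le_mul (hF0M _) ?_ (norm_nonneg _) hM0
      rw [hgb]; simp only; split_ifs
      · simp; exact hK0
      · rw [Real.norm_eq_abs, abs_of_nonneg hK0]; linarith
    · rw [hF0, indicator_of_notMem hz, indicator_of_notMem hz]; simp
  have hn0 : (0:ℝ) < n := by exact_mod_cast hn
  have hle2 : ∫ x, ∫ w, u (x - s • (w : Eu n)) * F0 x ∂μ ≤
      ∫ x, (u x * F0 x + s ^ 2 / (2 * n) * (F0 x * gb (dlt Ω x))) := by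
    refine integral_mono hI2.integral_prod_left (hIuF.add (hIg.const_mul _)) fun x => ?_
    simp only
    rw [integral_mul_const]
    have : u x * F0 x + s ^ 2 / (2 * n) * (F0 x * gb (dlt Ω x)) =
      (u x + s ^ 2 / (2 * n) * gb (dlt Ω x)) * F0 x := by ring
    rw [this]
    by_cases hx : x ∈ Ω
    swap
    · rw [hF0, indicator_of_notMem hx]; simp
    refine mul_le_mul_of_nonneg_right ?_ (hF00 x)
    obtain ⟨ν, hν, hsup⟩ := exists_normal hn ho hc hne hb x
    set t := dlt Ω x with ht
    have hpt : ∀ w : Sp n, u (x - s • (w : Eu n)) ≤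
        u x + Gd K η T t * s * inner ℝ ν (w : Eu n)
          + gb t / 2 * s ^ 2 * (inner ℝ ν (w : Eu n)) ^ 2 := by
      intro w
      have hw : ‖(w : Eu n)‖ = 1 := by simp
      set b := s * inner ℝ ν (w : Eu n) with hbdef
      have hbs : |b| ≤ s := by
        rw [hbdef, abs_mul, abs_of_pos hs]
        have := abs_real_inner_le_norm ν (w : Eu n)
        rw [hν, hw] at this
        nlinarith
      have hbs' := abs_le.mp hbs
      have hTr : t + b ≤ T + r := by linarith [hr x]
      have h1 : u (x - s • (w : Eu n)) ≤ Gf K η T (t + b) := by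
        by_cases hy : x - s • (w : Eu n) ∈ Ω
        · refine G_mono hηT hK0 hKr ?_ hTr
          have := dlt_le_of_half hν hsup hy
          rw [inner_sub_right, inner_smul_right] at this
          linarith
        · rw [huΩ _ hy]
          have := G_mono hηT hK0 hKr (t1 := min (t + b) η) (t2 := t + b) (min_le_left _ _) hTr
          rwa [G_zero hηT (min_le_right _ _)] at this
      have h2 : Gf K η T (t + b) ≤ Gf K η T t + Gd K η T t * b + gb t / 2 * b ^ 2 := by
        rw [hgb]; simp only; split_ifs with h
        · exact (G_taylor2 hηT (by linarith)).le
        · exact G_taylor hK0 t b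
      refine (h1.trans h2).trans (le_of_eq ?_)
      rw [hbdef]; ring
    have : CompactSpace (Sp n) := isCompact_iff_compactSpace.mp (isCompact_sphere _ _)
    have hint : ∀ F : Sp n → ℝ, Continuous F → Integrable F μ := by
      intro F hF
      exact hF.integrable_of_hasCompactSupport (HasCompactSupport.of_compactSpace _)
    have hcl : Continuous (fun y : Sp n => inner ℝ ν (y : Eu n)) :=
      (innerSL ℝ ν).continuous.comp continuous_subtype_val
    have hA := hint (fun w => u (x - s • (w : Eu n))) (huc.comp (by fun_prop))
    have hB := (hint _ hcl).const_mul (Gd K η T t * s)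
    have hC : Integrable (fun w : Sp n => gb t / 2 * s ^ 2 * (inner ℝ ν (w : Eu n)) ^ 2) μ := (hint _ (hcl.pow 2)).const_mul (gb t / 2 * s ^ 2)
    have hint_le := integral_mono hA (((integrable_const (u x)).add hB).add hC) hpt
    refine hint_le.trans (le_of_eq ?_)
    have e1 := integral_add ((integrable_const (μ := μ) (u x)).add hB) hC
    have e2 := integral_add (integrable_const (μ := μ) (u x)) hB
    simp only [Pi.add_apply] at e1 e2 ⊢
    rw [e1, e2, integral_const_mul, integral_const_mul, m1 ν, m2 ν hν]
    simp
    field_simp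
  rw [integral_add hIuF (hIg.const_mul _), integral_const_mul] at hle2
  have hfin : 0 ≤ s ^ 2 / (2 * n) * ∫ x, F0 x * gb (dlt Ω x) := by linarith
  have hfin' : 0 ≤ ∫ x, F0 x * gb (dlt Ω x) := by
    by_contra h
    push Not at h
    have : 0 < s ^ 2 / (2 * n) := by positivity
    nlinarith
  have hA : MeasurableSet {x | ε + 3 * s ≤ dlt Ω x} := measurableSet_le measurable_const (dlt_cont Ω).measurable
  have hset : ∫ x, F0 x * gb (dlt Ω x) =
      - (∫ x in Ω ∩ {x | ε + 3 * s ≤ dlt Ω x}, f x) + K * ∫ x in Ω ∩ {x | dlt Ω x < ε + 3 * s}, f x := by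
    have e0 : {x | dlt Ω x < ε + 3 * s} = {x | ε + 3 * s ≤ dlt Ω x}ᶜ := by
      ext x; simp
    rw [e0, ← integral_add_compl hA hIg]
    have c1 : ∫ x in {x | ε + 3 * s ≤ dlt Ω x}, F0 x * gb (dlt Ω x) =
        ∫ x in {x | ε + 3 * s ≤ dlt Ω x}, - F0 x := by
      refine setIntegral_congr_fun hA fun x hx => ?_
      simp only [hgb]; rw [if_pos (show ε + 3 * s ≤ dlt Ω x from hx)]; ring
    have c2 : ∫ x in {x | ε + 3 * s ≤ dlt Ω x}ᶜ, F0 x * gb (dlt Ω x) =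
        ∫ x in {x | ε + 3 * s ≤ dlt Ω x}ᶜ, K * F0 x := by
      refine setIntegral_congr_fun hA.compl fun x hx => ?_
      simp only [hgb]; rw [if_neg (show ¬ (ε + 3 * s ≤ dlt Ω x) from hx)]; ring
    rw [c1, c2, integral_neg, integral_const_mul, hF0, setIntegral_indicator ho.measurableSet,
      setIntegral_indicator ho.measurableSet, inter_comm Ω, inter_comm Ω]
  rw [hset] at hfin'
  linarith

lemma key_ineq' {n : ℕ} (hn : 0 < n) {Ω : Set (Eu n)} (ho : IsOpen Ω) (hc : Convex ℝ Ω)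
    (hne : Ω.Nonempty) (hb : Bornology.IsBounded Ω) {f : Eu n → ℝ}
    (hfc : ContinuousOn f (closure Ω)) (hf0 : ∀ x ∈ Ω, 0 ≤ f x) (hS : SubH f Ω)
    {r : ℝ} (hr : ∀ x, dlt Ω x ≤ r) (hr0 : 0 ≤ r) {ε : ℝ} (hε : 0 < ε) :
    ∫ x in Ω, f x ≤ (1 + r / ε) * ∫ x in Ω ∩ {x | dlt Ω x < ε}, f x := by
  have hA : MeasurableSet {x | ε ≤ dlt Ω x} := measurableSet_le measurable_const (dlt_cont Ω).measurable
  have hint : IntegrableOn f Ω volume :=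
    (hfc.integrableOn_compact hb.isCompact_closure).mono_set subset_closure
  have h1 : ∫ x in Ω ∩ {x | ε ≤ dlt Ω x}, f x ≤ (r / ε) * ∫ x in Ω ∩ {x | dlt Ω x < ε}, f x := by
    have ht : Tendsto (fun s : ℝ => (r / (ε - 3 * s)) * ∫ x in Ω ∩ {x | dlt Ω x < ε}, f x) (𝓝[>] 0)
        (𝓝 ((r / (ε - 3 * 0)) * ∫ x in Ω ∩ {x | dlt Ω x < ε}, f x)) := by
      apply Tendsto.mono_left _ nhdsWithin_le_nhds
      apply ContinuousAt.tendsto (f := fun s : ℝ => (r / (ε - 3 * s)) * ∫ x in Ω ∩ {x | dlt Ω x < ε}, f x)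
      apply ContinuousAt.mul _ continuousAt_const
      apply ContinuousAt.div continuousAt_const (by fun_prop)
      simp; exact hε.ne'
    simp only [mul_zero, sub_zero] at ht
    refine ge_of_tendsto ht ?_
    have : Ioo (0:ℝ) (ε / 3) ∈ 𝓝[>] (0:ℝ) := Ioo_mem_nhdsGT (by positivity)
    filter_upwards [this] with s hs
    have := key_ineq hn ho hc hne hb hfc hf0 hS hr hr0 hs.1 (by linarith [hs.2] : 0 < ε - 3 * s)
    simpa using this
  have e0 : {x | dlt Ω x < ε} = {x | ε ≤ dlt Ω x}ᶜ := by
    ext x; simp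
  have h2 := integral_inter_add_sdiff hA hint
  rw [Set.sdiff_eq, ← e0] at h2
  linarith

end HH

namespace HH

open Set Filter Topology

lemma lintegral_polar {m : ℕ} {F : Eu (m + 1) → ENNReal} (hF : Measurable F) :
    ∫⁻ x, F x = ∫⁻ w : Sp (m + 1), ∫⁻ s in Ioi (0:ℝ), ENNReal.ofReal (s ^ m) * F (s • (w : Eu (m + 1)))
      ∂volume ∂((volume : Measure (Eu (m + 1))).toSphere) := by
  have hmp := (volume : Measure (Eu (m + 1))).measurePreserving_homeomorphUnitSphereProd
  have hfr : Module.finrank ℝ (Eu (m + 1)) - 1 = m := by simp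
  rw [hfr] at hmp
  have h1 : ∫⁻ x, F x = ∫⁻ x : ({0}ᶜ : Set (Eu (m + 1))), F x ∂(volume.comap (Subtype.val)) := by
    rw [lintegral_subtype_comap (measurableSet_singleton _).compl]
    rw [restrict_compl_singleton]
  rw [h1]
  have h2 : ∫⁻ x : ({0}ᶜ : Set (Eu (m + 1))), F x ∂(volume.comap (Subtype.val)) =
      ∫⁻ z : Sp (m + 1) × Ioi (0:ℝ), F ((z.2 : ℝ) • (z.1 : Eu (m + 1)))
        ∂((volume : Measure (Eu (m + 1))).toSphere.prod (Measure.volumeIoiPow m)) := by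
    rw [← hmp.lintegral_comp (by fun_prop)]
    refine lintegral_congr fun x => ?_
    have := congrArg Subtype.val ((homeomorphUnitSphereProd (Eu (m + 1))).symm_apply_apply x)
    rw [homeomorphUnitSphereProd_symm_apply_coe] at this
    rw [this]
  rw [h2, lintegral_prod _ (by fun_prop)]
  refine lintegral_congr fun w => ?_
  rw [Measure.volumeIoiPow, lintegral_withDensity_eq_lintegral_mul _ (by fun_prop) (by fun_prop)]
  exact lintegral_subtype_comap measurableSet_Ioi
    (fun s : ℝ => ENNReal.ofReal (s ^ m) * F (s • (w : Eu (m + 1))))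

lemma lintegral_le_of_fiber {m : ℕ} {F H : Eu (m + 1) → ENNReal} (hF : Measurable F)
    (hH : Measurable H)
    (h : ∀ w : Eu (m + 1), ‖w‖ = 1 → ∫⁻ s in Ioi (0:ℝ), ENNReal.ofReal (s ^ m) * F (s • w) ≤
      ∫⁻ s in Ioi (0:ℝ), ENNReal.ofReal (s ^ m) * H (s • w)) : ∫⁻ x, F x ≤ ∫⁻ x, H x := by
  rw [lintegral_polar hF, lintegral_polar hH]
  exact lintegral_mono fun w => h w (by simp)

structure Cfg {n : ℕ} (Ω : Set (Eu n)) (r R : ℝ) : Prop where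
  hn : 0 < n
  ho : IsOpen Ω
  hc : Convex ℝ Ω
  hb : Bornology.IsBounded Ω
  hr : dlt Ω 0 = r
  hmax : ∀ x, dlt Ω x ≤ r
  hr0 : 0 < r
  hR : ∀ x ∈ closure Ω, ‖x‖ ≤ R

namespace Cfg

variable {n : ℕ} {Ω : Set (Eu n)} {r R : ℝ}

lemma mem0 (C : Cfg Ω r R) : (0 : Eu n) ∈ Ω := by
  by_contra h
  have := dlt_zero h
  linarith [C.hr, C.hr0]

lemma nhds0 (C : Cfg Ω r R) : Ω ∈ 𝓝 (0 : Eu n) := C.ho.mem_nhds C.mem0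

lemma ball_sub (C : Cfg Ω r R) : Metric.ball (0 : Eu n) r ⊆ Ω := by
  intro y hy
  by_contra h
  have : dlt Ω 0 ≤ dist 0 y := Metric.infDist_le_dist_of_mem h
  rw [Metric.mem_ball, dist_comm] at hy
  linarith [C.hr]

lemma hne (C : Cfg Ω r R) : Ω.Nonempty := ⟨0, C.mem0⟩

lemma R_nonneg (C : Cfg Ω r R) : 0 ≤ R := by simpa using C.hR 0 (subset_closure C.mem0)

lemma frontier_notMem (C : Cfg Ω r R) {q : Eu n} (hq : q ∈ frontier Ω) : q ∉ Ω := by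
  rw [C.ho.frontier_eq] at hq; exact hq.2

lemma gauge_frontier (C : Cfg Ω r R) {q : Eu n} : gauge Ω q = 1 ↔ q ∈ frontier Ω :=
  gauge_eq_one_iff_mem_frontier C.hc C.nhds0

lemma gauge_lt (C : Cfg Ω r R) {q : Eu n} : gauge Ω q < 1 ↔ q ∈ Ω := by
  rw [gauge_lt_one_iff_mem_interior C.hc C.nhds0, C.ho.interior_eq]

lemma gauge_cont (C : Cfg Ω r R) : Continuous (gauge Ω) := continuous_gauge C.hc C.nhds0

lemma gauge_pos' (C : Cfg Ω r R) {x : Eu n} : 0 < gauge Ω x ↔ x ≠ 0 :=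
  gauge_pos (absorbent_nhds_zero C.nhds0) (NormedSpace.isVonNBounded_of_isBounded ℝ C.hb)

lemma gauge_lip (C : Cfg Ω r R) (x y : Eu n) : |gauge Ω x - gauge Ω y| ≤ ‖x - y‖ / r := by
  have h := C.hc.lipschitzWith_gauge (r := ⟨r, C.hr0.le⟩) C.hr0 C.ball_sub
  have := h.dist_le_mul x y
  rw [Real.dist_eq, dist_eq_norm] at this
  rw [div_eq_inv_mul]
  exact this

lemma gauge_smul' {a : ℝ} (ha : 0 ≤ a) (x : Eu n) : gauge Ω (a • x) = a * gauge Ω x := by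
  rw [gauge_smul_of_nonneg ha, smul_eq_mul]

/-- concavity of the distance along segments to the closure -/
lemma conc (C : Cfg Ω r R) {q a : Eu n} (hq : q ∈ closure Ω) {μ : ℝ} (h0 : 0 < μ) (h1 : μ ≤ 1) :
    μ * dlt Ω a ≤ dlt Ω (μ • a + (1 - μ) • q) := by
  refine (Metric.le_infDist (compl_nonempty C.hn C.hb)).2 fun y hy => ?_
  by_contra h
  push Not at h
  apply hy
  have ha : a + μ⁻¹ • (y - (μ • a + (1 - μ) • q)) ∈ Ω := by
    by_contra h'
    have h2 : dlt Ω a ≤ dist a (a + μ⁻¹ • (y - (μ • a + (1 - μ) • q))) :=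
      Metric.infDist_le_dist_of_mem h'
    rw [dist_self_add_right, norm_smul, norm_inv, Real.norm_eq_abs, abs_of_pos h0,
      ← dist_eq_norm, dist_comm] at h2
    rw [inv_mul_eq_div, le_div_iff₀ h0] at h2
    linarith
  have h3 := C.hc.combo_interior_closure_subset_interior h0 (by linarith : 0 ≤ 1 - μ) (by ring)
  rw [C.ho.interior_eq] at h3
  have h4 := h3 (Set.add_mem_add (Set.smul_mem_smul_set ha) (Set.smul_mem_smul_set hq))
  convert h4 using 1
  rw [smul_add, smul_smul, mul_inv_cancel₀ h0.ne', one_smul]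
  abel

lemma ray (C : Cfg Ω r R) {q : Eu n} (hq : q ∈ closure Ω) {s t : ℝ} (hs : 0 < s) (hst : s ≤ t) :
    s / t * dlt Ω ((1 - t) • q) ≤ dlt Ω ((1 - s) • q) := by
  have ht : 0 < t := hs.trans_le hst
  have := C.conc (a := (1 - t) • q) hq (μ := s / t) (by positivity) ((div_le_one ht).2 hst)
  refine this.trans (le_of_eq ?_)
  congr 1
  rw [smul_smul, ← add_smul]
  congr 1
  field_simp
  ring

lemma ray1 (C : Cfg Ω r R) {q : Eu n} (hq : q ∈ closure Ω) {s : ℝ} (hs : 0 < s) (hst : s ≤ 1) :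
    s * r ≤ dlt Ω ((1 - s) • q) := by
  have := C.ray hq hs hst
  simpa [C.hr] using this

end Cfg

noncomputable def Nk {n : ℕ} (Ω : Set (Eu n)) (k : ℕ) (q : Eu n) : ℝ :=
  ((k : ℝ) + 2) * dlt Ω ((1 - 1 / ((k : ℝ) + 2)) • q)

noncomputable def NN {n : ℕ} (Ω : Set (Eu n)) (q : Eu n) : ℝ := ⨆ k, Nk Ω k q

lemma Nk_meas {n : ℕ} (Ω : Set (Eu n)) (k : ℕ) : Measurable (Nk Ω k) := by
  have := dlt_cont Ω
  unfold Nk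
  exact (continuous_const.mul (this.comp (by fun_prop))).measurable

lemma NN_meas {n : ℕ} (Ω : Set (Eu n)) : Measurable (NN Ω) :=
  Measurable.iSup fun k => Nk_meas Ω k

namespace Cfg

variable {n : ℕ} {Ω : Set (Eu n)} {r R : ℝ}

lemma Nk_ge (C : Cfg Ω r R) {q : Eu n} (hq : q ∈ closure Ω) (k : ℕ) : r ≤ Nk Ω k q := by
  have hk : (0:ℝ) < (k:ℝ) + 2 := by positivity
  have := C.ray1 hq (s := 1 / ((k:ℝ) + 2)) (by positivity) (by rw [div_le_one hk]; linarith [(Nat.cast_nonneg k : (0:ℝ) ≤ k)])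
  unfold Nk
  have h2 := mul_le_mul_of_nonneg_left this hk.le
  refine le_trans (le_of_eq ?_) h2
  field_simp

lemma Nk_mono (C : Cfg Ω r R) {q : Eu n} (hq : q ∈ closure Ω) : Monotone (fun k => Nk Ω k q) := by
  intro j k hjk
  have hj : (0:ℝ) < (j:ℝ) + 2 := by positivity
  have hk : (0:ℝ) < (k:ℝ) + 2 := by positivity
  have hjk' : (j:ℝ) ≤ k := by exact_mod_cast hjk
  have := C.ray hq (s := 1 / ((k:ℝ) + 2)) (t := 1 / ((j:ℝ) + 2)) (by positivity)
    (one_div_le_one_div_of_le hj (by linarith))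
  simp only [Nk]
  have h2 := mul_le_mul_of_nonneg_left this hk.le
  refine le_trans (le_of_eq ?_) h2
  field_simp

lemma Nk_le (C : Cfg Ω r R) {q : Eu n} (hq : q ∈ frontier Ω) (k : ℕ) : Nk Ω k q ≤ R := by
  have hk : (0:ℝ) < (k:ℝ) + 2 := by positivity
  have h1 : dlt Ω ((1 - 1 / ((k : ℝ) + 2)) • q) ≤ dist ((1 - 1 / ((k : ℝ) + 2)) • q) q :=
    Metric.infDist_le_dist_of_mem (C.frontier_notMem hq)
  have h2 : dist ((1 - 1 / ((k : ℝ) + 2)) • q) q = 1 / ((k : ℝ) + 2) * ‖q‖ := by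
    rw [dist_eq_norm, sub_smul, one_smul]
    rw [show q - (1 / ((k : ℝ) + 2)) • q - q = - ((1 / ((k : ℝ) + 2)) • q) by abel, norm_neg,
      norm_smul, Real.norm_eq_abs, abs_of_pos (by positivity)]
  rw [h2] at h1
  have h3 := mul_le_mul_of_nonneg_left h1 hk.le
  unfold Nk
  refine h3.trans (le_trans (le_of_eq ?_) (C.hR q (frontier_subset_closure hq)))
  field_simp

lemma Nk_bdd (C : Cfg Ω r R) {q : Eu n} (hq : q ∈ frontier Ω) :
    BddAbove (range fun k => Nk Ω k q) := ⟨R, by rintro _ ⟨k, rfl⟩; exact C.Nk_le hq k⟩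

lemma Nk_tendsto (C : Cfg Ω r R) {q : Eu n} (hq : q ∈ frontier Ω) :
    Tendsto (fun k => Nk Ω k q) atTop (𝓝 (NN Ω q)) :=
  tendsto_atTop_ciSup (C.Nk_mono (frontier_subset_closure hq)) (C.Nk_bdd hq)

lemma Nk_le_NN (C : Cfg Ω r R) {q : Eu n} (hq : q ∈ frontier Ω) (k : ℕ) : Nk Ω k q ≤ NN Ω q :=
  le_ciSup (C.Nk_bdd hq) k

lemma NN_ge (C : Cfg Ω r R) {q : Eu n} (hq : q ∈ frontier Ω) : r ≤ NN Ω q :=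
  (C.Nk_ge (frontier_subset_closure hq) 0).trans (C.Nk_le_NN hq 0)

/-- existence of the minimal normal -/
lemma exists_nu (C : Cfg Ω r R) {q : Eu n} (hq : q ∈ frontier Ω) :
    ∃ ν : Eu n, ‖ν‖ = 1 ∧ (∀ y ∈ closure Ω, inner ℝ ν y ≤ inner ℝ ν q) ∧ inner ℝ ν q ≤ NN Ω q := by
  choose ν hν hs using fun k : ℕ => exists_normal C.hn C.ho C.hc C.hne C.hb
    ((1 - 1 / ((k : ℝ) + 2)) • q)
  have hs' : ∀ k, ∀ y ∈ closure Ω, inner ℝ (ν k) y ≤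
      inner ℝ (ν k) ((1 - 1 / ((k : ℝ) + 2)) • q) + dlt Ω ((1 - 1 / ((k : ℝ) + 2)) • q) := by
    intro k y hy
    have hcl : IsClosed {y : Eu n | inner ℝ (ν k) y ≤
      inner ℝ (ν k) ((1 - 1 / ((k : ℝ) + 2)) • q) + dlt Ω ((1 - 1 / ((k : ℝ) + 2)) • q)} :=
      isClosed_le (by fun_prop) continuous_const
    exact closure_minimal (fun y hy => (hs k y hy).le) hcl hy
  have hN : ∀ k, inner ℝ (ν k) q ≤ NN Ω q := by
    intro k
    have hk : (0:ℝ) < (k:ℝ) + 2 := by positivity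
    have h1 := hs' k q (frontier_subset_closure hq)
    rw [inner_smul_right] at h1
    have h2 := C.Nk_le_NN hq k
    unfold Nk at h2
    have h3 : (1 / ((k : ℝ) + 2)) * inner ℝ (ν k) q ≤ dlt Ω ((1 - 1 / ((k : ℝ) + 2)) • q) := by
      linarith
    have h4 := mul_le_mul_of_nonneg_left h3 hk.le
    rw [← mul_assoc, mul_one_div_cancel hk.ne', one_mul] at h4
    linarith
  obtain ⟨ν0, hν0, φ, hφ, hlim⟩ := (isCompact_sphere (0 : Eu n) 1).tendsto_subseq
    (x := ν) (fun k => by simp [hν k])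
  have ht0 : Tendsto (fun k : ℕ => 1 / ((k : ℝ) + 2)) atTop (𝓝 0) := by
    have := tendsto_const_div_atTop_nhds_zero_nat (1:ℝ)
    have := (tendsto_add_atTop_iff_nat 2).2 this
    simpa using this
  have ht : Tendsto (fun k : ℕ => (1 - 1 / ((k : ℝ) + 2)) • q) atTop (𝓝 q) := by
    have := (tendsto_const_nhds (x := (1:ℝ))).sub ht0
    simpa using this.smul_const q
  have ht' := ht.comp hφ.tendsto_atTop
  refine ⟨ν0, by simpa using hν0, fun y hy => ?_, ?_⟩
  · have l1 : Tendsto (fun k => inner ℝ (ν (φ k)) y) atTop (𝓝 (inner ℝ ν0 y)) :=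
      hlim.inner tendsto_const_nhds
    have l2 : Tendsto (fun k => inner ℝ (ν (φ k)) ((1 - 1 / ((φ k : ℝ) + 2)) • q)
        + dlt Ω ((1 - 1 / ((φ k : ℝ) + 2)) • q)) atTop (𝓝 (inner ℝ ν0 q + dlt Ω q)) :=
      (hlim.inner ht').add (((dlt_cont Ω).tendsto q).comp ht')
    rw [dlt_zero (C.frontier_notMem hq), add_zero] at l2
    exact le_of_tendsto_of_tendsto' l1 l2 fun k => hs' (φ k) y hy
  · have l1 : Tendsto (fun k => inner ℝ (ν (φ k)) q) atTop (𝓝 (inner ℝ ν0 q)) :=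
      hlim.inner tendsto_const_nhds
    exact le_of_tendsto' l1 fun k => hN (φ k)

/-- any normal has support value at least r -/
lemma normal_ge (C : Cfg Ω r R) {q ν : Eu n} (hν : ‖ν‖ = 1)
    (h : ∀ y ∈ closure Ω, inner ℝ ν y ≤ inner ℝ ν q) : r ≤ inner ℝ ν q := by
  have h1 : r • ν ∈ closure Ω := by
    have : r • ν ∈ closure (Metric.ball (0 : Eu n) r) := by
      rw [closure_ball _ C.hr0.ne']
      simp [norm_smul, hν, abs_of_pos C.hr0]
    exact closure_mono C.ball_sub this
  have := h _ h1
  rw [inner_smul_right, real_inner_self_eq_norm_sq, hν] at this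
  linarith

end Cfg

end HH

namespace HH

open Set Filter Topology

noncomputable def qm {n : ℕ} (Ω : Set (Eu n)) (x : Eu n) : Eu n := (gauge Ω x)⁻¹ • x

lemma lint_pow (m : ℕ) {ρ : ℝ} (hρ : 0 ≤ ρ) :
    ∫⁻ s in Ioo (0:ℝ) ρ, ENNReal.ofReal (s ^ m) = ENNReal.ofReal (ρ ^ (m + 1) / (m + 1)) := by
  rw [Measure.restrict_congr_set Ioo_ae_eq_Ioc,
    ← ofReal_integral_eq_lintegral_ofReal (intervalIntegral.intervalIntegrable_pow _).1,
    ← intervalIntegral.integral_of_le hρ]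
  · simp
  · filter_upwards [ae_restrict_mem measurableSet_Ioc] with y hy
    exact pow_nonneg hy.1.le _

namespace Cfg

lemma qm_meas {n : ℕ} {Ω : Set (Eu n)} {r R : ℝ} (C : Cfg Ω r R) : Measurable (qm Ω) := by
  unfold qm
  exact C.gauge_cont.measurable.inv.smul measurable_id

lemma qm_smul {n : ℕ} {Ω : Set (Eu n)} {s : ℝ} (hs : 0 < s) (x : Eu n) :
    qm Ω (s • x) = qm Ω x := by
  unfold qm
  rw [gauge_smul' hs.le, mul_inv, smul_smul]
  congr 1
  field_simp

lemma qm_frontier {n : ℕ} {Ω : Set (Eu n)} {r R : ℝ} (C : Cfg Ω r R) {x : Eu n} (hx : x ≠ 0) :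
    qm Ω x ∈ frontier Ω := by
  rw [← C.gauge_frontier]
  unfold qm
  have := C.gauge_pos'.2 hx
  rw [gauge_smul' (by positivity), inv_mul_cancel₀ this.ne']

lemma shell {m : ℕ} {Ω : Set (Eu (m + 1))} {r R : ℝ} (C : Cfg Ω r R) {f : Eu (m + 1) → ℝ}
    (hfm : Measurable f) (hf0 : ∀ x ∈ closure Ω, 0 ≤ f x) {η : ℝ} (hη : 0 < η) (k : ℕ)
    (hmod : ∀ x ∈ closure Ω, ∀ y ∈ closure Ω, ‖x - y‖ ≤ 1 / ((k:ℝ) + 2) * R → f x ≤ f y + η) :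
    ∫⁻ x in Ω ∩ {x | dlt Ω x < r * (1 / ((k:ℝ) + 2))}, ENNReal.ofReal (f x) ≤
    ∫⁻ x in Ω, ENNReal.ofReal (((m:ℝ) + 1) * (r * (1 / ((k:ℝ) + 2))) *
      ((f (qm Ω x) + η) / Nk Ω k (qm Ω x))) := by
  have hk : (0:ℝ) < (k:ℝ) + 2 := by positivity
  set t : ℝ := 1 / ((k:ℝ) + 2) with ht
  have ht0 : 0 < t := by positivity
  have ht1 : t ≤ 1 := by rw [ht, div_le_one hk]; linarith [(Nat.cast_nonneg k : (0:ℝ) ≤ k)]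
  have hS : MeasurableSet (Ω ∩ {x | dlt Ω x < r * t}) :=
    C.ho.measurableSet.inter (measurableSet_lt (dlt_cont Ω).measurable measurable_const)
  rw [← lintegral_indicator hS, ← lintegral_indicator C.ho.measurableSet]
  have hq := C.qm_meas
  have hNm := Nk_meas Ω k
  refine lintegral_le_of_fiber ?_ ?_ fun w hw => ?_
  · exact (hfm.ennreal_ofReal).indicator hS
  · refine Measurable.indicator ?_ C.ho.measurableSet
    exact ((((hfm.comp hq).add_const η).div (hNm.comp hq)).const_mul _).ennreal_ofReal
  have hw0 : w ≠ 0 := by intro h; rw [h] at hw; simp at hw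
  have hg := C.gauge_pos'.2 hw0
  set g := gauge Ω w with hgd
  set ρ := g⁻¹ with hρd
  have hρ : 0 < ρ := by positivity
  set q := ρ • w with hqd
  have hqw : qm Ω w = q := rfl
  have hqf : q ∈ frontier Ω := by rw [← hqw]; exact C.qm_frontier hw0
  have hqc := frontier_subset_closure hqf
  have hin : ∀ s, 0 < s → (s • w ∈ Ω ↔ s < ρ) := by
    intro s hs
    rw [← C.gauge_lt, gauge_smul' hs.le, hρd, lt_inv_comm₀ hs hg, ← one_div, lt_div_iff₀ hs, mul_comm]
  have hN : r ≤ Nk Ω k q := C.Nk_ge hqc k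
  have hNpos : 0 < Nk Ω k q := C.hr0.trans_le hN
  have hfq := hf0 q hqc
  set a := r * t / Nk Ω k q with ha
  have ha0 : 0 ≤ a := by have := C.hr0; positivity
  have hNk : Nk Ω k q * t = dlt Ω ((1 - t) • q) := by
    unfold Nk; rw [← ht]; field_simp; rw [ht]; field_simp
  have hRHS : ∫⁻ s in Ioi (0:ℝ), ENNReal.ofReal (s ^ m) *
      Ω.indicator (fun x => ENNReal.ofReal (((m:ℝ) + 1) * (r * t) *
      ((f (qm Ω x) + η) / Nk Ω k (qm Ω x)))) (s • w) =
      ENNReal.ofReal (ρ ^ (m + 1) / (m + 1)) * ENNReal.ofReal (((m:ℝ) + 1) * (r * t) *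
      ((f q + η) / Nk Ω k q)) := by
    rw [← lint_pow m hρ.le, ← lintegral_mul_const _ (by fun_prop),
      ← lintegral_indicator measurableSet_Ioo, ← lintegral_indicator measurableSet_Ioi]
    refine lintegral_congr fun s => ?_
    by_cases hs : 0 < s
    · rw [indicator_of_mem (show s ∈ Ioi (0:ℝ) from hs)]
      by_cases hs' : s < ρ
      · rw [indicator_of_mem ((hin s hs).2 hs'), indicator_of_mem (show s ∈ Ioo 0 ρ from ⟨hs, hs'⟩),
          qm_smul hs, hqw]
      · rw [indicator_of_notMem (fun h => hs' ((hin s hs).1 h)),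
          indicator_of_notMem (fun h => hs' h.2), mul_zero]
    · rw [indicator_of_notMem (show s ∉ Ioi (0:ℝ) from hs), indicator_of_notMem (fun h => hs h.1)]
  rw [hRHS]
  have hpt : ∀ s ∈ Ioi (0:ℝ), ENNReal.ofReal (s ^ m) *
      (Ω ∩ {x | dlt Ω x < r * t}).indicator (fun x => ENNReal.ofReal (f x)) (s • w) ≤
      (Ioo (ρ * (1 - a)) ρ).indicator (fun _ => ENNReal.ofReal (ρ ^ m * (f q + η))) s := by
    intro s hs
    have hs : 0 < s := hs
    by_cases hsw : s • w ∈ Ω ∩ {x | dlt Ω x < r * t}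
    swap
    · rw [indicator_of_notMem hsw, mul_zero]; exact zero_le
    rw [indicator_of_mem hsw]
    have hsρ := (hin s hs).1 hsw.1
    set l := s * g with hl
    have hlq : s • w = (1 - (1 - l)) • q := by
      rw [hqd, smul_smul, hl, hρd]; congr 1; field_simp; ring
    have hl1 : 0 < 1 - l := by
      have : s * g < ρ * g := by gcongr
      rw [hρd, inv_mul_cancel₀ hg.ne'] at this
      linarith
    have hl0 : 0 < l := by positivity
    have hd : dlt Ω (s • w) < r * t := hsw.2
    rw [hlq] at hd
    have h1 := C.ray1 hqc hl1 (by linarith)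
    have hlt : 1 - l < t := by
      have : (1 - l) * r < t * r := by linarith
      exact lt_of_mul_lt_mul_right this C.hr0.le
    have h2 := C.ray hqc hl1 hlt.le
    rw [← hNk] at h2
    have h3 : (1 - l) * Nk Ω k q < r * t := by
      refine lt_of_le_of_lt (le_trans (le_of_eq ?_) h2) hd
      field_simp
    have h4 : 1 - l < a := by rw [ha, lt_div_iff₀ hNpos]; exact h3
    have hsl : s = ρ * l := by rw [hl, hρd]; field_simp
    have hmem : s ∈ Ioo (ρ * (1 - a)) ρ := by
      refine ⟨?_, hsρ⟩
      rw [hsl]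
      exact mul_lt_mul_of_pos_left (by linarith) hρ
    rw [indicator_of_mem hmem, ← ENNReal.ofReal_mul (by positivity)]
    apply ENNReal.ofReal_le_ofReal
    have hfx : f (s • w) ≤ f q + η := by
      refine hmod _ (subset_closure hsw.1) _ hqc ?_
      rw [hlq, sub_smul, one_smul, sub_sub_cancel_left, norm_neg, norm_smul, Real.norm_eq_abs,
        abs_of_pos hl1]
      exact mul_le_mul hlt.le (C.hR q hqc) (norm_nonneg _) ht0.le
    exact mul_le_mul (pow_le_pow_left₀ hs.le hsρ.le m) hfx (hf0 _ (subset_closure hsw.1)) (by positivity)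
  calc _ ≤ ∫⁻ s in Ioi (0:ℝ), (Ioo (ρ * (1 - a)) ρ).indicator
        (fun _ => ENNReal.ofReal (ρ ^ m * (f q + η))) s := setLIntegral_mono' measurableSet_Ioi hpt
    _ ≤ ∫⁻ s, (Ioo (ρ * (1 - a)) ρ).indicator
        (fun _ => ENNReal.ofReal (ρ ^ m * (f q + η))) s := setLIntegral_le_lintegral _ _
    _ = ENNReal.ofReal (ρ ^ m * (f q + η)) * ENNReal.ofReal (ρ * a) := by
        rw [lintegral_indicator measurableSet_Ioo, setLIntegral_const, Real.volume_Ioo]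
        congr 2; ring
    _ = _ := by
        rw [← ENNReal.ofReal_mul (by positivity), ← ENNReal.ofReal_mul (by positivity)]
        congr 1
        rw [ha]; field_simp
        ring

/-- The main inner estimate. -/
lemma inner_est {m : ℕ} {Ω : Set (Eu (m + 1))} {r R : ℝ} (C : Cfg Ω r R) {f : Eu (m + 1) → ℝ}
    (hfm : Measurable f) (hfc : ContinuousOn f (closure Ω))
    (hf0 : ∀ x ∈ closure Ω, 0 ≤ f x)
    (hkey : ∀ ε : ℝ, 0 < ε → ∫ x in Ω, f x ≤ (1 + r / ε) * ∫ x in Ω ∩ {x | dlt Ω x < ε}, f x)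
    {η : ℝ} (hη : 0 < η) :
    ∫⁻ x in Ω, ENNReal.ofReal (f x) ≤ ENNReal.ofReal (((m:ℝ) + 1) * r) *
      ∫⁻ x in Ω, ENNReal.ofReal ((f (qm Ω x) + η) / NN Ω (qm Ω x)) := by
  have hr := C.hr0
  have hcomp : IsCompact (closure Ω) := C.hb.isCompact_closure
  have hint : IntegrableOn f Ω volume :=
    (hfc.integrableOn_compact hcomp).mono_set subset_closure
  have hvol : volume Ω < ⊤ := C.hb.measure_lt_top
  obtain ⟨M, hM⟩ := hcomp.exists_bound_of_continuousOn hfc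
  have huc := hcomp.uniformContinuousOn_of_continuous hfc
  rw [Metric.uniformContinuousOn_iff_le] at huc
  obtain ⟨d, hd, hmod⟩ := huc η hη
  have ht0 : Tendsto (fun k : ℕ => 1 / ((k : ℝ) + 2)) atTop (𝓝 0) := by
    have := tendsto_const_div_atTop_nhds_zero_nat (1:ℝ)
    have := (tendsto_add_atTop_iff_nat 2).2 this
    simpa using this
  have htR : Tendsto (fun k : ℕ => 1 / ((k : ℝ) + 2) * R) atTop (𝓝 0) := by
    simpa using ht0.mul_const R
  have hq := C.qm_meas
  have hlim : Tendsto (fun k : ℕ => ENNReal.ofReal (((m:ℝ) + 1) * r * (1 + 1 / ((k:ℝ) + 2))) *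
      ∫⁻ x in Ω, ENNReal.ofReal ((f (qm Ω x) + η) / Nk Ω k (qm Ω x))) atTop
      (𝓝 (ENNReal.ofReal (((m:ℝ) + 1) * r * (1 + 0)) *
      ∫⁻ x in Ω, ENNReal.ofReal ((f (qm Ω x) + η) / NN Ω (qm Ω x)))) := by
    have hne : ∀ᵐ x ∂(volume.restrict Ω), x ≠ 0 := by
      apply ae_restrict_of_ae
      exact Measure.ae_ne volume 0
    have hl : Tendsto (fun k : ℕ => ∫⁻ x in Ω, ENNReal.ofReal ((f (qm Ω x) + η) / Nk Ω k (qm Ω x))) atTop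
        (𝓝 (∫⁻ x in Ω, ENNReal.ofReal ((f (qm Ω x) + η) / NN Ω (qm Ω x)))) := by
      refine tendsto_lintegral_of_dominated_convergence (fun _ => ENNReal.ofReal ((M + η) / r))
        (fun k => ?_) (fun k => ?_) ?_ ?_
      · exact (((hfm.comp hq).add_const η).div ((Nk_meas Ω k).comp hq)).ennreal_ofReal
      · filter_upwards [hne] with x hx
        have hqf := C.qm_frontier hx
        have hqc := frontier_subset_closure hqf
        apply ENNReal.ofReal_le_ofReal
        have h1 := (le_abs_self _).trans (hM _ hqc)
        have h0 := hf0 _ hqc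
        have h2 := C.Nk_ge hqc k
        exact div_le_div₀ (by linarith) (by linarith) hr h2
      · rw [setLIntegral_const]
        exact ENNReal.mul_ne_top ENNReal.ofReal_ne_top hvol.ne
      · filter_upwards [hne] with x hx
        have hqf := C.qm_frontier hx
        apply ENNReal.tendsto_ofReal
        exact tendsto_const_nhds.div (C.Nk_tendsto hqf) (hr.trans_le (C.NN_ge hqf)).ne'
    refine ENNReal.Tendsto.mul ?_ ?_ hl (Or.inr ENNReal.ofReal_ne_top)
    · apply ENNReal.tendsto_ofReal
      exact tendsto_const_nhds.mul (tendsto_const_nhds.add ht0)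
    · left
      simp only [add_zero]
      have : 0 < ((m:ℝ) + 1) * r := by positivity
      simpa using this
  rw [add_zero, mul_one] at hlim
  refine ge_of_tendsto hlim ?_
  filter_upwards [htR.eventually (ge_mem_nhds hd)] with k hk
  have hkp : (0:ℝ) < (k:ℝ) + 2 := by positivity
  have hsh := C.shell hfm hf0 hη k (fun x hx y hy hxy => by
    have := hmod x hx y hy (by rw [dist_eq_norm]; exact hxy.trans hk)
    rw [Real.dist_eq] at this
    linarith [le_abs_self (f x - f y)])
  set t : ℝ := 1 / ((k:ℝ) + 2) with ht
  have ht0 : 0 < t := by positivity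
  have hk1 := hkey (r * t) (by positivity)
  have hS : MeasurableSet (Ω ∩ {x | dlt Ω x < r * t}) :=
    C.ho.measurableSet.inter (measurableSet_lt (dlt_cont Ω).measurable measurable_const)
  have e1 : ∫⁻ x in Ω, ENNReal.ofReal (f x) = ENNReal.ofReal (∫ x in Ω, f x) := by
    rw [ofReal_integral_eq_lintegral_ofReal hint]
    exact (ae_restrict_mem C.ho.measurableSet).mono fun x hx => hf0 x (subset_closure hx)
  have e2 : ∫⁻ x in Ω ∩ {x | dlt Ω x < r * t}, ENNReal.ofReal (f x) =
      ENNReal.ofReal (∫ x in Ω ∩ {x | dlt Ω x < r * t}, f x) := by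
    rw [ofReal_integral_eq_lintegral_ofReal (hint.mono_set inter_subset_left)]
    exact (ae_restrict_mem hS).mono fun x hx => hf0 x (subset_closure hx.1)
  have e3 : ∫⁻ x in Ω, ENNReal.ofReal (((m:ℝ) + 1) * (r * t) *
      ((f (qm Ω x) + η) / Nk Ω k (qm Ω x))) = ENNReal.ofReal (((m:ℝ) + 1) * (r * t)) *
      ∫⁻ x in Ω, ENNReal.ofReal ((f (qm Ω x) + η) / Nk Ω k (qm Ω x)) := by
    rw [← lintegral_const_mul]
    · refine lintegral_congr fun x => ?_
      rw [ENNReal.ofReal_mul (by positivity)]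
    · exact (((hfm.comp hq).add_const η).div ((Nk_meas Ω k).comp hq)).ennreal_ofReal
  rw [e3, e2] at hsh
  rw [e1]
  calc ENNReal.ofReal (∫ x in Ω, f x) ≤ ENNReal.ofReal ((1 + r / (r * t)) * ∫ x in Ω ∩ {x | dlt Ω x < r * t}, f x) :=
        ENNReal.ofReal_le_ofReal hk1
    _ = ENNReal.ofReal (1 + r / (r * t)) * ENNReal.ofReal (∫ x in Ω ∩ {x | dlt Ω x < r * t}, f x) :=
        ENNReal.ofReal_mul (by positivity)
    _ ≤ ENNReal.ofReal (1 + r / (r * t)) * (ENNReal.ofReal (((m:ℝ) + 1) * (r * t)) *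
      ∫⁻ x in Ω, ENNReal.ofReal ((f (qm Ω x) + η) / Nk Ω k (qm Ω x))) := by gcongr
    _ = _ := by
        rw [← mul_assoc, ← ENNReal.ofReal_mul (by positivity)]
        congr 2
        field_simp
        ring

end Cfg

end HH

namespace HH

open Set Filter Topology

lemma exists_cst (d : ℕ) : ∃ c : ENNReal, c ≠ 0 ∧ c ≠ ⊤ ∧
    ∀ s : Set (Eu d), volume s = c * μH[(d:ℝ)] s := by
  refine ⟨(volume : Measure (Eu d)).addHaarScalarFactor (μH[(d:ℝ)] : Measure (Eu d)), ?_,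
    ENNReal.coe_ne_top, fun s => ?_⟩
  · exact_mod_cast Measure.addHaarScalarFactor_volume_hausdorffMeasure_ne_zero d
  · conv_lhs => rw [Measure.isAddLeftInvariant_eq_smul (volume : Measure (Eu d)) (μH[(d:ℝ)] : Measure (Eu d))]
    rfl

lemma vol_lip {d : ℕ} {K : NNReal} {s : Set (Eu d)} {T : Eu d → Eu d} (h : LipschitzOnWith K T s) :
    volume (T '' s) ≤ (K : ENNReal) ^ d * volume s := by
  obtain ⟨c, h0, ht, hc⟩ := exists_cst d
  rw [hc, hc]
  have := h.hausdorffMeasure_image_le (d := d) (Nat.cast_nonneg d)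
  rw [ENNReal.rpow_natCast] at this
  calc c * μH[(d:ℝ)] (T '' s) ≤ c * ((K : ENNReal) ^ d * μH[(d:ℝ)] s) := by gcongr
    _ = _ := by ring

def cone {n : ℕ} (A : Set (Eu n)) : Set (Eu n) := {x | ∃ l ∈ Ioo (0:ℝ) 1, ∃ p ∈ A, x = l • p}

noncomputable def tl {m : ℕ} (x : Eu (m + 1)) : Eu m := WithLp.toLp 2 (fun i => x i.succ)

noncomputable def mk {m : ℕ} (s : ℝ) (y : Eu m) : Eu (m + 1) :=
  WithLp.toLp 2 (Fin.cons s (fun i => y i))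

lemma mk_tl {m : ℕ} (x : Eu (m + 1)) : mk (x 0) (tl x) = x := by
  ext i
  refine Fin.cases ?_ (fun j => ?_) i <;> simp [mk, tl]

lemma split_mp {m : ℕ} : MeasurePreserving (fun x : Eu (m + 1) => (x 0, tl x)) volume
    ((volume : Measure ℝ).prod (volume : Measure (Eu m))) := by
  have h1 := PiLp.volume_preserving_ofLp (Fin (m + 1))
  have h2 := volume_preserving_piFinSuccAbove (fun _ : Fin (m + 1) => ℝ) 0
  have h3 := (MeasurePreserving.id (volume : Measure ℝ)).prod (PiLp.volume_preserving_toLp (Fin m))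
  have := (h3.comp h2).comp h1
  exact this

lemma mk_isom {m : ℕ} (s : ℝ) : Isometry (mk (m := m) s) := by
  refine Isometry.of_dist_eq fun x y => ?_
  rw [EuclideanSpace.dist_eq, EuclideanSpace.dist_eq, Fin.sum_univ_succ]
  simp [mk]

lemma flat0 {m : ℕ} {c : ENNReal} (hc : ∀ s : Set (Eu m), volume s = c * μH[(m:ℝ)] s)
    {h : ℝ} (hh : 0 < h) {A : Set (Eu (m + 1))} (hA : MeasurableSet A) (hAe : ∀ p ∈ A, p 0 = h) :
    ((m:ENNReal) + 1) * volume (cone A) = c * ENNReal.ofReal h * μH[(m:ℝ)] A := by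
  set B : Set (Eu m) := mk h ⁻¹' A with hB
  have hBm : MeasurableSet B := (mk_isom h).continuous.measurable hA
  have hAB : A = mk h '' B := by
    ext p
    constructor
    · intro hp
      refine ⟨tl p, ?_, ?_⟩
      · rw [hB, mem_preimage, ← hAe p hp, mk_tl]; exact hp
      · rw [← hAe p hp, mk_tl]
    · rintro ⟨y, hy, rfl⟩; exact hy
  have hσ : μH[(m:ℝ)] A = μH[(m:ℝ)] B := by
    rw [hAB]; exact (mk_isom h).hausdorffMeasure_image (Or.inl (Nat.cast_nonneg m)) B
  set D : Set (ℝ × Eu m) := {z | z.1 ∈ Ioo 0 h ∧ (h / z.1) • z.2 ∈ B} with hD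
  have hDm : MeasurableSet D := by
    have hme : Measurable (fun z : ℝ × Eu m => (h / z.1) • z.2) :=
      (measurable_const.div measurable_fst).smul measurable_snd
    exact (measurable_fst measurableSet_Ioo).inter (hme hBm)
  have hcone : cone A = (fun x : Eu (m + 1) => (x 0, tl x)) ⁻¹' D := by
    ext x
    simp only [cone, mem_ofPred_eq, mem_preimage, hD, hB]
    constructor
    · rintro ⟨l, hl, p, hp, rfl⟩
      have hp0 := hAe p hp
      have hl0 := hl.1
      have e0 : (l • p) 0 = l * h := by simp [hp0]
      rw [e0]
      refine ⟨⟨by positivity, by nlinarith [hl.2]⟩, ?_⟩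
      have : (h / (l * h)) • tl (l • p) = tl p := by
        ext i
        simp only [tl, PiLp.smul_apply, smul_eq_mul]
        field_simp
      rw [this, ← hp0, mk_tl]
      exact hp
    · rintro ⟨⟨h0, h1⟩, hm⟩
      refine ⟨x 0 / h, ⟨by positivity, (div_lt_one hh).2 h1⟩, _, hm, ?_⟩
      ext i
      refine Fin.cases ?_ (fun j => ?_) i
      · simp [mk]; field_simp
      · simp [mk, tl]; field_simp
  rw [hcone, split_mp.measure_preimage hDm.nullMeasurableSet, Measure.prod_apply hDm, hσ]
  have hsl : ∀ s : ℝ, volume (Prod.mk s ⁻¹' D) =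
      (Ioo 0 h).indicator (fun s => ENNReal.ofReal (s ^ m) * (ENNReal.ofReal ((h ^ m)⁻¹) * volume B)) s := by
    intro s
    by_cases hs : s ∈ Ioo 0 h
    · rw [indicator_of_mem hs]
      have hs0 := hs.1
      have : Prod.mk s ⁻¹' D = (fun y => (h / s) • y) ⁻¹' B := by
        ext y; simp only [hD, mem_preimage, mem_ofPred_eq, hs, true_and]
      rw [this, Measure.addHaar_preimage_smul _ (by positivity)]
      rw [← mul_assoc, ← ENNReal.ofReal_mul (by positivity)]
      congr 2
      rw [abs_of_nonneg (by positivity)]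
      simp
      field_simp
      rw [← mul_pow, div_mul_cancel₀ _ hs0.ne']
    · rw [indicator_of_notMem hs]
      have : Prod.mk s ⁻¹' D = ∅ := by
        ext y; simp only [hD, mem_preimage, mem_ofPred_eq, hs, false_and, mem_empty_iff_false]
      rw [this, measure_empty]
  rw [lintegral_congr hsl, lintegral_indicator measurableSet_Ioo,
    lintegral_mul_const _ (by fun_prop), lint_pow m hh.le, hc]
  have e1 : ((m:ENNReal) + 1) = ENNReal.ofReal ((m:ℝ) + 1) := by
    rw [ENNReal.ofReal_add (by positivity) (by positivity)]; simp
  rw [e1]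
  calc _ = (ENNReal.ofReal ((m:ℝ) + 1) * ENNReal.ofReal (h ^ (m + 1) / (m + 1)) *
      ENNReal.ofReal ((h ^ m)⁻¹)) * (c * μH[(m:ℝ)] B) := by ring
    _ = ENNReal.ofReal h * (c * μH[(m:ℝ)] B) := by
      rw [← ENNReal.ofReal_mul (by positivity), ← ENNReal.ofReal_mul (by positivity)]
      congr 2
      field_simp
      ring
    _ = _ := by ring

lemma exists_rot {m : ℕ} {e : Eu (m + 1)} (he : ‖e‖ = 1) :
    ∃ L : Eu (m + 1) ≃ₗᵢ[ℝ] Eu (m + 1), ∀ x, (L x) 0 = inner ℝ e x := by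
  set e0 : Eu (m + 1) := EuclideanSpace.single 0 1 with he0
  have hn : ‖e‖ = ‖e0‖ := by rw [he, he0]; simp
  refine ⟨(Submodule.reflection (ℝ ∙ (e - e0))ᗮ), fun x => ?_⟩
  have h1 := Submodule.reflection_sub hn
  have h2 : ((Submodule.reflection (ℝ ∙ (e - e0))ᗮ) x) 0 =
      inner ℝ e0 ((Submodule.reflection (ℝ ∙ (e - e0))ᗮ) x) := by
    rw [he0, EuclideanSpace.inner_single_left]; simp
  rw [h2]
  nth_rewrite 1 [← h1]
  rw [LinearIsometryEquiv.inner_map_map]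

lemma flat {m : ℕ} {c : ENNReal} (hc : ∀ s : Set (Eu m), volume s = c * μH[(m:ℝ)] s)
    {e : Eu (m + 1)} (he : ‖e‖ = 1)
    {h : ℝ} (hh : 0 < h) {A : Set (Eu (m + 1))} (hA : MeasurableSet A)
    (hAe : ∀ p ∈ A, inner ℝ e p = h) :
    ((m:ENNReal) + 1) * volume (cone A) = c * ENNReal.ofReal h * μH[(m:ℝ)] A := by
  obtain ⟨L, hL⟩ := exists_rot he
  have hLA : MeasurableSet (L '' A) := (L.toHomeomorph.measurableEmbedding.measurableSet_image).2 hA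
  have h1 := flat0 hc hh hLA (by rintro _ ⟨p, hp, rfl⟩; rw [hL, hAe p hp])
  have h2 : cone (L '' A) = L '' cone A := by
    ext x
    constructor
    · rintro ⟨l, hl, _, ⟨p, hp, rfl⟩, rfl⟩
      exact ⟨l • p, ⟨l, hl, p, hp, rfl⟩, by simp⟩
    · rintro ⟨_, ⟨l, hl, p, hp, rfl⟩, rfl⟩
      exact ⟨l, hl, _, ⟨p, hp, rfl⟩, by simp⟩
  have h3 : volume (L '' cone A) = volume (cone A) := by
    rw [← (L.measurePreserving).measure_preimage_equiv (f := L.toMeasurableEquiv) (L '' cone A)]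
    congr 1
    exact (preimage_image_eq _ L.injective)
  rw [h2, h3, L.isometry.hausdorffMeasure_image (Or.inl (Nat.cast_nonneg m))] at h1
  exact h1

end HH

namespace HH

open Set Filter Topology

lemma exists_inv {n : ℕ} {s : Set (Eu n)} {T : Eu n → Eu n} {K : NNReal}
    (hT : ∀ x ∈ s, ∀ y ∈ s, ‖x - y‖ ≤ K * ‖T x - T y‖) :
    ∃ V : Eu n → Eu n, LipschitzOnWith K V (T '' s) ∧ V '' (T '' s) = s ∧ InjOn T s := by
  have hinj : InjOn T s := by
    intro x hx y hy hxy
    have := hT x hx y hy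
    rw [hxy, sub_self, norm_zero, mul_zero] at this
    exact sub_eq_zero.1 (norm_le_zero_iff.1 this)
  have hl : ∀ x ∈ s, Function.invFunOn T s (T x) = x := fun x hx =>
    hinj.leftInvOn_invFunOn hx
  refine ⟨Function.invFunOn T s, ?_, ?_, hinj⟩
  · refine LipschitzOnWith.of_dist_le_mul ?_
    rintro _ ⟨x, hx, rfl⟩ _ ⟨y, hy, rfl⟩
    rw [hl x hx, hl y hy, dist_eq_norm, dist_eq_norm]
    exact hT x hx y hy
  · ext x
    constructor
    · rintro ⟨_, ⟨y, hy, rfl⟩, rfl⟩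
      rw [hl y hy]; exact hy
    · intro hx
      exact ⟨T x, ⟨x, hx, rfl⟩, hl x hx⟩

noncomputable def Tm {n : ℕ} (Ω : Set (Eu n)) (e : Eu n) (h : ℝ) (x : Eu n) : Eu n :=
  x + (h * gauge Ω x - inner ℝ e x) • e

noncomputable def Kc (m : ℕ) (β : ℝ) : ENNReal :=
  ENNReal.ofReal (1 + β) ^ (m + 1) * ENNReal.ofReal ((1 - β)⁻¹) ^ (m + 1)

namespace Cfg

lemma psi_bound {n : ℕ} {Ω : Set (Eu n)} {r R : ℝ} (C : Cfg Ω r R) {θ h : ℝ} (hθ : 0 ≤ θ)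
    {e : Eu n} {A : Set (Eu n)} (hAf : A ⊆ frontier Ω)
    (H1 : ∀ q ∈ A, ∃ ν : Eu n, ‖ν - e‖ ≤ θ ∧ ∀ y ∈ closure Ω, inner ℝ ν y ≤ inner ℝ ν q)
    (H2 : ∀ q ∈ A, |inner ℝ e q - h| ≤ θ)
    {q q' : Eu n} (hq : q ∈ A) (hq' : q' ∈ A) {l l' : ℝ} (hl : 0 < l) (hl' : 0 < l') :
    |(h * gauge Ω (l • q) - inner ℝ e (l • q)) - (h * gauge Ω (l' • q') - inner ℝ e (l' • q'))| ≤
      θ * (1 / r + 1 + R / r) * ‖l • q - l' • q'‖ := by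
  have hr := C.hr0
  have g1 : ∀ q ∈ A, gauge Ω q = 1 := fun q hq => C.gauge_frontier.2 (hAf hq)
  have key : ∀ p ∈ A, ∀ q ∈ A, inner ℝ e (p - q) ≤ θ * ‖p - q‖ := by
    intro p hp q hq
    obtain ⟨ν, hν, hsup⟩ := H1 q hq
    have h1 := hsup p (frontier_subset_closure (hAf hp))
    have h2 : inner ℝ (e - ν) (p - q) ≤ ‖e - ν‖ * ‖p - q‖ := real_inner_le_norm _ _
    rw [norm_sub_rev] at h2
    have h3 : ‖ν - e‖ * ‖p - q‖ ≤ θ * ‖p - q‖ := by gcongr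
    have h4 : inner ℝ (e - ν) (p - q) = inner ℝ e (p - q) - (inner ℝ ν p - inner ℝ ν q) := by
      rw [inner_sub_left, inner_sub_right ν]
    linarith
  have key' : |inner ℝ e q - inner ℝ e q'| ≤ θ * ‖q - q'‖ := by
    rw [abs_le]
    have h1 := key q hq q' hq'
    have h2 := key q' hq' q hq
    rw [norm_sub_rev] at h2
    rw [inner_sub_right] at h1 h2
    constructor <;> linarith
  have hlip := C.gauge_lip (l • q) (l' • q')
  rw [gauge_smul' hl.le, gauge_smul' hl'.le, g1 q hq, g1 q' hq', mul_one, mul_one] at hlip ⊢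
  rw [inner_smul_right, inner_smul_right]
  set d := ‖l • q - l' • q'‖ with hd
  have hd0 : 0 ≤ d := norm_nonneg _
  have hqR := C.hR q (frontier_subset_closure (hAf hq))
  have hR0 := C.R_nonneg
  have h5 : l' * ‖q - q'‖ ≤ d + d / r * R := by
    have e1 : l' • (q - q') = (l • q - l' • q') - (l - l') • q := by
      rw [smul_sub, sub_smul]; abel
    have e2 : ‖l' • (q - q')‖ = l' * ‖q - q'‖ := by rw [norm_smul, Real.norm_eq_abs, abs_of_pos hl']
    rw [← e2, e1]
    refine (norm_sub_le _ _).trans ?_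
    rw [norm_smul, Real.norm_eq_abs]
    have : |l - l'| * ‖q‖ ≤ d / r * R := mul_le_mul hlip hqR (norm_nonneg _) (by positivity)
    linarith
  have e3 : (h * l - l * inner ℝ e q) - (h * l' - l' * inner ℝ e q') =
      - ((l - l') * (inner ℝ e q - h)) - l' * (inner ℝ e q - inner ℝ e q') := by ring
  rw [e3]
  have a1 : |(l - l') * (inner ℝ e q - h)| ≤ d / r * θ := by
    rw [abs_mul]
    exact mul_le_mul hlip (H2 q hq) (abs_nonneg _) (by positivity)
  have a2 : |l' * (inner ℝ e q - inner ℝ e q')| ≤ θ * (d + d / r * R) := by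
    rw [abs_mul, abs_of_pos hl']
    calc l' * |inner ℝ e q - inner ℝ e q'| ≤ l' * (θ * ‖q - q'‖) := by gcongr
      _ = θ * (l' * ‖q - q'‖) := by ring
      _ ≤ _ := by gcongr
  have a3 := abs_sub (- ((l - l') * (inner ℝ e q - h))) (l' * (inner ℝ e q - inner ℝ e q'))
  rw [abs_neg] at a3
  refine a3.trans ((add_le_add a1 a2).trans (le_of_eq ?_))
  field_simp
  ring

lemma cell {m : ℕ} {Ω : Set (Eu (m + 1))} {r R : ℝ} (C : Cfg Ω r R) {c : ENNReal}
    (hc : ∀ s : Set (Eu m), volume s = c * μH[(m:ℝ)] s) {θ h β : ℝ} (hθ : 0 ≤ θ) (hh : 0 < h)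
    (hβ : β = θ * (1 / r + 1 + R / r)) (hβ1 : β < 1)
    {e : Eu (m + 1)} (he : ‖e‖ = 1) {A : Set (Eu (m + 1))} (hAm : MeasurableSet A)
    (hAf : A ⊆ frontier Ω)
    (H1 : ∀ q ∈ A, ∃ ν : Eu (m + 1), ‖ν - e‖ ≤ θ ∧ ∀ y ∈ closure Ω, inner ℝ ν y ≤ inner ℝ ν q)
    (H2 : ∀ q ∈ A, |inner ℝ e q - h| ≤ θ) :
    ((m:ENNReal) + 1) * volume (cone A) ≤ Kc m β * (c * ENNReal.ofReal h * μH[(m:ℝ)] A) ∧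
    c * ENNReal.ofReal h * μH[(m:ℝ)] A ≤ Kc m β * (((m:ENNReal) + 1) * volume (cone A)) := by
  have hr := C.hr0
  have hR0 := C.R_nonneg
  have hβ0 : 0 ≤ β := by rw [hβ]; positivity
  have g1 : ∀ q ∈ A, gauge Ω q = 1 := fun q hq => C.gauge_frontier.2 (hAf hq)
  set T := Tm Ω e h with hT
  set X : Set (Eu (m + 1)) := {x | ∃ l : ℝ, 0 < l ∧ ∃ p ∈ A, x = l • p} with hX
  have hAX : A ⊆ X := fun q hq => ⟨1, one_pos, q, hq, by simp⟩
  have hCX : cone A ⊆ X := by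
    rintro x ⟨l, hl, p, hp, rfl⟩; exact ⟨l, hl.1, p, hp, rfl⟩
  have hdiff : ∀ x ∈ X, ∀ y ∈ X, ‖(T x - T y) - (x - y)‖ ≤ β * ‖x - y‖ := by
    rintro _ ⟨l, hl, p, hp, rfl⟩ _ ⟨l', hl', p', hp', rfl⟩
    have := C.psi_bound hθ hAf H1 H2 hp hp' hl hl'
    rw [← hβ] at this
    have e1 : (T (l • p) - T (l' • p')) - (l • p - l' • p') =
      ((h * gauge Ω (l • p) - inner ℝ e (l • p)) - (h * gauge Ω (l' • p') - inner ℝ e (l' • p'))) • e := by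
      rw [hT]; unfold Tm; module
    rw [e1, norm_smul, he, mul_one]
    exact this
  have hup : ∀ x ∈ X, ∀ y ∈ X, ‖T x - T y‖ ≤ (1 + β) * ‖x - y‖ := by
    intro x hx y hy
    have h1 := hdiff x hx y hy
    have h2 := norm_le_norm_add_norm_sub' (T x - T y) (x - y)
    linarith
  have hlo : ∀ x ∈ X, ∀ y ∈ X, ‖x - y‖ ≤ (1 - β)⁻¹ * ‖T x - T y‖ := by
    intro x hx y hy
    have h1 := hdiff x hx y hy
    have h2 := norm_le_norm_add_norm_sub (T x - T y) (x - y)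
    rw [← div_eq_inv_mul, le_div_iff₀ (by linarith)]
    linarith
  have hLup : LipschitzOnWith (Real.toNNReal (1 + β)) T X := by
    refine LipschitzOnWith.of_dist_le_mul fun x hx y hy => ?_
    rw [dist_eq_norm, dist_eq_norm, Real.coe_toNNReal _ (by linarith)]
    exact hup x hx y hy
  have hinvp : 0 ≤ (1 - β)⁻¹ := inv_nonneg.2 (by linarith)
  have hlo' : ∀ s ⊆ X, ∀ x ∈ s, ∀ y ∈ s, ‖x - y‖ ≤ (Real.toNNReal ((1 - β)⁻¹)) * ‖T x - T y‖ := by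
    intro s hs x hx y hy
    rw [Real.coe_toNNReal _ hinvp]
    exact hlo x (hs hx) y (hs hy)
  obtain ⟨V, hV, hVA, hinj⟩ := exists_inv (hlo' A hAX)
  obtain ⟨W, hW, hWA, -⟩ := exists_inv (hlo' (cone A) hCX)
  have hTA : MeasurableSet (T '' A) :=
    hAm.image_of_continuousOn_injOn (hLup.continuousOn.mono hAX) hinj
  have hTcone : T '' cone A = cone (T '' A) := by
    have hhom : ∀ l : ℝ, 0 < l → ∀ p, T (l • p) = l • T p := by
      intro l hl p
      rw [hT]; unfold Tm
      rw [gauge_smul' hl.le, inner_smul_right, smul_add, smul_smul]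
      congr 2; ring
    ext x
    constructor
    · rintro ⟨_, ⟨l, hl, p, hp, rfl⟩, rfl⟩
      exact ⟨l, hl, _, ⟨p, hp, rfl⟩, hhom l hl.1 p⟩
    · rintro ⟨l, hl, _, ⟨p, hp, rfl⟩, rfl⟩
      exact ⟨l • p, ⟨l, hl, p, hp, rfl⟩, hhom l hl.1 p⟩
  have hflat := flat hc he hh hTA (by
    rintro _ ⟨p, hp, rfl⟩
    rw [hT]; unfold Tm
    rw [inner_add_right, inner_smul_right, real_inner_self_eq_norm_sq, he, g1 p hp]
    ring)
  rw [← hTcone] at hflat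
  have v1 : volume (T '' cone A) ≤ ENNReal.ofReal (1 + β) ^ (m + 1) * volume (cone A) :=
    vol_lip (hLup.mono hCX)
  have v2 : volume (cone A) ≤ ENNReal.ofReal ((1 - β)⁻¹) ^ (m + 1) * volume (T '' cone A) := by
    have := vol_lip hW
    rw [hWA] at this
    exact this
  have s1 : μH[(m:ℝ)] (T '' A) ≤ ENNReal.ofReal (1 + β) ^ m * μH[(m:ℝ)] A := by
    have := (hLup.mono hAX).hausdorffMeasure_image_le (d := m) (Nat.cast_nonneg m)
    rw [ENNReal.rpow_natCast] at this
    exact this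
  have s2 : μH[(m:ℝ)] A ≤ ENNReal.ofReal ((1 - β)⁻¹) ^ m * μH[(m:ℝ)] (T '' A) := by
    have := hV.hausdorffMeasure_image_le (d := m) (Nat.cast_nonneg m)
    rw [hVA, ENNReal.rpow_natCast] at this
    exact this
  have p1 : ENNReal.ofReal (1 + β) ^ m ≤ ENNReal.ofReal (1 + β) ^ (m + 1) := by
    refine pow_le_pow_right₀ ?_ (Nat.le_succ m)
    rw [ENNReal.one_le_ofReal]; linarith
  have p2 : ENNReal.ofReal ((1 - β)⁻¹) ^ m ≤ ENNReal.ofReal ((1 - β)⁻¹) ^ (m + 1) := by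
    refine pow_le_pow_right₀ ?_ (Nat.le_succ m)
    rw [ENNReal.one_le_ofReal]
    exact (one_le_inv₀ (by linarith)).2 (by linarith)
  unfold Kc
  constructor
  · calc ((m:ENNReal) + 1) * volume (cone A)
        ≤ ((m:ENNReal) + 1) * (ENNReal.ofReal ((1 - β)⁻¹) ^ (m + 1) * volume (T '' cone A)) := by gcongr
      _ = ENNReal.ofReal ((1 - β)⁻¹) ^ (m + 1) * (((m:ENNReal) + 1) * volume (T '' cone A)) := by ring
      _ = ENNReal.ofReal ((1 - β)⁻¹) ^ (m + 1) * (c * ENNReal.ofReal h * μH[(m:ℝ)] (T '' A)) := by rw [hflat]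
      _ ≤ ENNReal.ofReal ((1 - β)⁻¹) ^ (m + 1) * (c * ENNReal.ofReal h *
          (ENNReal.ofReal (1 + β) ^ (m + 1) * μH[(m:ℝ)] A)) := by
          gcongr
          exact s1.trans (by gcongr)
      _ = _ := by ring
  · calc c * ENNReal.ofReal h * μH[(m:ℝ)] A
        ≤ c * ENNReal.ofReal h * (ENNReal.ofReal ((1 - β)⁻¹) ^ (m + 1) * μH[(m:ℝ)] (T '' A)) := by
          gcongr
          exact s2.trans (by gcongr)
      _ = ENNReal.ofReal ((1 - β)⁻¹) ^ (m + 1) * (c * ENNReal.ofReal h * μH[(m:ℝ)] (T '' A)) := by ring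
      _ = ENNReal.ofReal ((1 - β)⁻¹) ^ (m + 1) * (((m:ENNReal) + 1) * volume (T '' cone A)) := by rw [hflat]
      _ ≤ ENNReal.ofReal ((1 - β)⁻¹) ^ (m + 1) * (((m:ENNReal) + 1) *
          (ENNReal.ofReal (1 + β) ^ (m + 1) * volume (cone A))) := by gcongr
      _ = _ := by ring

end Cfg

end HH

namespace HH

open Set Filter Topology

/-- closed cells of boundary points with a normal near `e` and support value near `h` -/
def Pc {n : ℕ} (Ω : Set (Eu n)) (θ : ℝ) (e : Eu n) (h t : ℝ) : Set (Eu n) :=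
  {q | q ∈ frontier Ω ∧ ∃ ν : Eu n, ‖ν‖ = 1 ∧ ‖ν - e‖ ≤ θ ∧ ∀ y ∈ closure Ω, inner ℝ ν y ≤ inner ℝ ν q} ∩
    ({q | |inner ℝ e q - h| ≤ θ} ∩ {q | h ≤ NN Ω q + t})

lemma Pc_meas {n : ℕ} {Ω : Set (Eu n)} (hb : Bornology.IsBounded Ω) (θ : ℝ) (e : Eu n) (h t : ℝ) :
    MeasurableSet (Pc Ω θ e h t) := by
  refine MeasurableSet.inter ?_ (MeasurableSet.inter ?_ ?_)
  · have hfc : IsCompact (frontier Ω) :=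
      hb.isCompact_closure.of_isClosed_subset isClosed_frontier frontier_subset_closure
    have hK : IsCompact ((Metric.sphere (0 : Eu n) 1 ×ˢ frontier Ω) ∩
        {p : Eu n × Eu n | ‖p.1 - e‖ ≤ θ ∧ ∀ y ∈ closure Ω, inner ℝ p.1 y ≤ inner ℝ p.1 p.2}) := by
      refine ((isCompact_sphere _ _).prod hfc).inter_right ?_
      have e1 : {p : Eu n × Eu n | ‖p.1 - e‖ ≤ θ ∧ ∀ y ∈ closure Ω, inner ℝ p.1 y ≤ inner ℝ p.1 p.2} =
          {p : Eu n × Eu n | ‖p.1 - e‖ ≤ θ} ∩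
            ⋂ y ∈ closure Ω, {p : Eu n × Eu n | inner ℝ p.1 y ≤ inner ℝ p.1 p.2} := by
        ext p; simp
      rw [e1]
      refine IsClosed.inter (isClosed_le (by fun_prop) (by fun_prop)) ?_
      refine isClosed_biInter fun y _ => isClosed_le (by fun_prop) (by fun_prop)
    have := (hK.image continuous_snd).measurableSet
    convert this using 1
    ext q
    constructor
    · rintro ⟨hq, ν, h1, h2, h3⟩
      exact ⟨(ν, q), ⟨⟨by simpa using h1, hq⟩, h2, h3⟩, rfl⟩
    · rintro ⟨⟨ν, q'⟩, ⟨⟨h1, hq⟩, h2, h3⟩, rfl⟩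
      exact ⟨hq, ν, by simpa using h1, h2, h3⟩
  · exact (isClosed_le (by fun_prop) (by fun_prop)).measurableSet
  · exact measurableSet_le measurable_const ((NN_meas Ω).add_const t)

namespace Cfg

lemma cells {m : ℕ} {Ω : Set (Eu (m + 1))} {r R : ℝ} (C : Cfg Ω r R) {c : ENNReal}
    (hc : ∀ s : Set (Eu m), volume s = c * μH[(m:ℝ)] s) {θ t β : ℝ} (hθ : 0 < θ)
    (ht : t = θ * (1 + R)) (htr : t < r)
    (hβ : β = θ * (1 / r + 1 + R / r)) (hβ1 : β < 1) :
    ∃ (B : ℕ → Set (Eu (m + 1))) (h : ℕ → ℝ), (∀ k, MeasurableSet (B k)) ∧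
      Pairwise (Function.onFun Disjoint B) ∧ (⋃ k, B k) = frontier Ω ∧
      (∀ k, ∀ q ∈ B k, h k ≤ NN Ω q + t ∧ r - t ≤ h k) ∧
      ∀ k, ∀ A ⊆ B k, MeasurableSet A →
        ((m:ENNReal) + 1) * volume (cone A) ≤ Kc m β * (c * ENNReal.ofReal (h k) * μH[(m:ℝ)] A) ∧
        c * ENNReal.ofReal (h k) * μH[(m:ℝ)] A ≤ Kc m β * (((m:ENNReal) + 1) * volume (cone A)) := by
  have : Nonempty (Sp (m + 1)) := ⟨⟨EuclideanSpace.single 0 1, by simp [Sp]⟩⟩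
  let u := TopologicalSpace.denseSeq (Sp (m + 1))
  let v := TopologicalSpace.denseSeq ℝ
  let P : ℕ → Set (Eu (m + 1)) := fun k => Pc Ω θ (u k.unpair.1 : Eu (m + 1)) (v k.unpair.2) t
  have hPm : ∀ k, MeasurableSet (P k) := fun k => Pc_meas C.hb _ _ _ _
  have hu1 : ∀ k, ‖(u k : Eu (m + 1))‖ = 1 := fun k => by simpa [Sp] using (u k).2
  have hPr : ∀ k, ∀ q ∈ P k, r - t ≤ v k.unpair.2 := by
    rintro k q ⟨⟨hq, ν, h1, h2, h3⟩, h4, -⟩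
    have a1 := C.normal_ge h1 h3
    have a2 : inner ℝ (ν - (u k.unpair.1 : Eu (m + 1))) q ≤ θ * R :=
      (real_inner_le_norm _ _).trans (mul_le_mul h2 (C.hR q (frontier_subset_closure hq))
        (norm_nonneg _) hθ.le)
    rw [inner_sub_left] at a2
    have a3 := (abs_le.1 (show |inner ℝ (u k.unpair.1 : Eu (m + 1)) q - v k.unpair.2| ≤ θ from h4)).2
    rw [ht]; linarith
  have hsub : ∀ k, disjointed P k ⊆ P k := fun k => disjointed_subset P k
  refine ⟨disjointed P, fun k => v k.unpair.2, fun k => MeasurableSet.disjointed hPm k,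
    disjoint_disjointed P, ?_, ?_, ?_⟩
  · rw [iUnion_disjointed]
    apply Subset.antisymm
    · exact iUnion_subset fun k q hq => hq.1.1
    · intro q hq
      obtain ⟨ν, h1, h2, h3⟩ := C.exists_nu hq
      obtain ⟨i, hi⟩ := (TopologicalSpace.denseRange_denseSeq (Sp (m + 1))).exists_dist_lt
        (⟨ν, by simpa [Sp] using h1⟩ : Sp (m + 1)) hθ
      obtain ⟨j, hj⟩ := (TopologicalSpace.denseRange_denseSeq ℝ).exists_dist_lt
        (inner ℝ (u i : Eu (m + 1)) q) hθ
      have hi' : ‖ν - (u i : Eu (m + 1))‖ ≤ θ := by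
        rw [← dist_eq_norm]; exact hi.le
      have hj' : |inner ℝ (u i : Eu (m + 1)) q - v j| ≤ θ := by
        rw [← Real.dist_eq]; exact hj.le
      refine mem_iUnion.2 ⟨Nat.pair i j, ?_⟩
      simp only [P, Nat.unpair_pair]
      refine ⟨⟨hq, ν, h1, hi', h2⟩, hj', ?_⟩
      have a2 : inner ℝ ((u i : Eu (m + 1)) - ν) q ≤ θ * R :=
        (real_inner_le_norm _ _).trans (mul_le_mul (by rw [norm_sub_rev]; exact hi')
          (C.hR q (frontier_subset_closure hq)) (norm_nonneg _) hθ.le)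
      rw [inner_sub_left] at a2
      have a3 := (abs_le.1 hj').1
      show v j ≤ NN Ω q + t
      rw [ht]; linarith
  · intro k q hq
    exact ⟨(hsub k hq).2.2, hPr k q (hsub k hq)⟩
  · intro k A hA hAm
    rcases A.eq_empty_or_nonempty with rfl | ⟨q0, hq0⟩
    · have : cone (∅ : Set (Eu (m + 1))) = ∅ := by
        ext x; simp [cone]
      simp [this]
    · have hh : 0 < v k.unpair.2 := by
        have := hPr k q0 (hsub k (hA hq0)); linarith
      refine C.cell hc hθ.le hh hβ hβ1 (hu1 _) hAm (fun q hq => (hsub k (hA hq)).1.1) ?_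
        (fun q hq => (hsub k (hA hq)).2.1)
      intro q hq
      obtain ⟨ν, -, h2, h3⟩ := (hsub k (hA hq)).1.2
      exact ⟨ν, h2, h3⟩

lemma cone_eq {n : ℕ} {Ω : Set (Eu n)} {r R : ℝ} (C : Cfg Ω r R) {A : Set (Eu n)}
    (hA : A ⊆ frontier Ω) : cone A = qm Ω ⁻¹' A ∩ Ω := by
  ext x
  constructor
  · rintro ⟨l, hl, p, hp, rfl⟩
    have hg := C.gauge_frontier.2 (hA hp)
    refine ⟨?_, ?_⟩
    · show qm Ω (l • p) ∈ A
      rw [qm_smul hl.1]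
      unfold qm
      rw [hg]; simpa using hp
    · rw [← C.gauge_lt, gauge_smul' hl.1.le, hg, mul_one]
      exact hl.2
  · rintro ⟨h1, h2⟩
    have h1 : qm Ω x ∈ A := h1
    have hx : x ≠ 0 := by
      rintro rfl
      have : qm Ω (0 : Eu n) = 0 := by simp [qm]
      rw [this] at h1
      exact C.frontier_notMem (hA h1) C.mem0
    have hp := C.gauge_pos'.2 hx
    refine ⟨gauge Ω x, ⟨hp, C.gauge_lt.2 h2⟩, _, h1, ?_⟩
    unfold qm
    rw [smul_smul, mul_inv_cancel₀ hp.ne', one_smul]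

lemma sum_est {m : ℕ} {Ω : Set (Eu (m + 1))} {r R : ℝ} (C : Cfg Ω r R) {c : ENNReal}
    (hc : ∀ s : Set (Eu m), volume s = c * μH[(m:ℝ)] s) {θ t β : ℝ} (hθ : 0 < θ)
    (ht : t = θ * (1 + R)) (htr : t < r)
    (hβ : β = θ * (1 / r + 1 + R / r)) (hβ1 : β < 1) {G : Eu (m + 1) → ENNReal} (hG : Measurable G) :
    c * ENNReal.ofReal (r - t) * μH[(m:ℝ)] (frontier Ω) ≤ Kc m β * (((m:ENNReal) + 1) * volume Ω) ∧
    ((m:ENNReal) + 1) * ∫⁻ x in Ω, G (qm Ω x) * ENNReal.ofReal (1 / NN Ω (qm Ω x)) ≤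
      Kc m β * ENNReal.ofReal (1 + t / r) * (c * ∫⁻ x in frontier Ω, G x ∂μH[(m:ℝ)]) := by
  obtain ⟨B, h, hBm, hBd, hBU, hBh, hB⟩ := C.cells hc hθ ht htr hβ hβ1
  have hr := C.hr0
  have ht0 : 0 ≤ t := by rw [ht]; have := C.R_nonneg; positivity
  set M : Measure (Eu (m + 1)) := Measure.map (qm Ω) (volume.restrict Ω) with hM
  have hBf : ∀ k, B k ⊆ frontier Ω := fun k => by rw [← hBU]; exact subset_iUnion B k
  have hMA : ∀ A, A ⊆ frontier Ω → MeasurableSet A → M A = volume (cone A) := by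
    intro A hA hAm
    rw [hM, Measure.map_apply C.qm_meas hAm, Measure.restrict_apply (C.qm_meas hAm), C.cone_eq hA]
  constructor
  · have e1 : μH[(m:ℝ)] (frontier Ω) = ∑' k, μH[(m:ℝ)] (B k) := by
      rw [← hBU, measure_iUnion hBd hBm]
    have e2 : ∑' k, M (B k) ≤ volume Ω := by
      rw [← measure_iUnion hBd hBm, hM, Measure.map_apply C.qm_meas (MeasurableSet.iUnion hBm)]
      refine (measure_mono (subset_univ _)).trans ?_
      rw [Measure.restrict_apply_univ]
    rw [e1, ← ENNReal.tsum_mul_left]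
    calc ∑' k, c * ENNReal.ofReal (r - t) * μH[(m:ℝ)] (B k)
        ≤ ∑' k, Kc m β * (((m:ENNReal) + 1) * M (B k)) := by
          refine ENNReal.tsum_le_tsum fun k => ?_
          rcases (B k).eq_empty_or_nonempty with h0 | ⟨q0, hq0⟩
          · simp [h0]
          · rw [hMA _ (hBf k) (hBm k)]
            refine le_trans ?_ (hB k _ subset_rfl (hBm k)).2
            gcongr
            exact (hBh k q0 hq0).2
      _ = Kc m β * (((m:ENNReal) + 1) * ∑' k, M (B k)) := by
          rw [ENNReal.tsum_mul_left, ENNReal.tsum_mul_left]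
      _ ≤ _ := by gcongr
  · set F : Eu (m + 1) → ENNReal := fun q => G q * ENNReal.ofReal (1 / NN Ω q) with hF
    have hFm : Measurable F := hG.mul ((measurable_const.div (NN_meas Ω)).ennreal_ofReal)
    have e1 : ∫⁻ x in Ω, G (qm Ω x) * ENNReal.ofReal (1 / NN Ω (qm Ω x)) = ∫⁻ q, F q ∂M := by
      rw [hM, lintegral_map hFm C.qm_meas]
    have e2 : ∫⁻ q, F q ∂M = ∫⁻ q in frontier Ω, F q ∂M := by
      rw [← lintegral_add_compl F isClosed_frontier.measurableSet, ]
      have : M (frontier Ω)ᶜ = 0 := by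
        rw [hM, Measure.map_apply C.qm_meas isClosed_frontier.measurableSet.compl]
        refine measure_mono_null (t := {0}) ?_ (by simp)
        intro x hx
        by_contra h
        exact hx (C.qm_frontier h)
      rw [Measure.restrict_eq_zero.2 this]; simp
    rw [e1, e2, ← hBU, lintegral_iUnion hBm hBd, lintegral_iUnion hBm hBd, ← ENNReal.tsum_mul_left,
      ← ENNReal.tsum_mul_left, ← ENNReal.tsum_mul_left]
    refine ENNReal.tsum_le_tsum fun k => ?_
    have hle : ((m:ENNReal) + 1) • M.restrict (B k) ≤
        (Kc m β * (c * ENNReal.ofReal (h k))) • (μH[(m:ℝ)]).restrict (B k) := by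
      refine Measure.le_iff.2 fun s hs => ?_
      rw [Measure.smul_apply, Measure.smul_apply, Measure.restrict_apply hs, Measure.restrict_apply hs,
        smul_eq_mul, smul_eq_mul, hMA _ (inter_subset_right.trans (hBf k)) (hs.inter (hBm k))]
      have := (hB k _ (inter_subset_right (s := s)) (hs.inter (hBm k))).1
      rwa [mul_assoc]
    calc ((m:ENNReal) + 1) * ∫⁻ q in B k, F q ∂M
        = ∫⁻ q, F q ∂(((m:ENNReal) + 1) • M.restrict (B k)) := by
          rw [lintegral_smul_measure, smul_eq_mul]
      _ ≤ ∫⁻ q, F q ∂((Kc m β * (c * ENNReal.ofReal (h k))) • (μH[(m:ℝ)]).restrict (B k)) :=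
          lintegral_mono' hle le_rfl
      _ = Kc m β * c * ∫⁻ q in B k, ENNReal.ofReal (h k) * F q ∂μH[(m:ℝ)] := by
          rw [lintegral_smul_measure, smul_eq_mul, lintegral_const_mul _ hFm]; ring
      _ ≤ Kc m β * c * ∫⁻ q in B k, ENNReal.ofReal (1 + t / r) * G q ∂μH[(m:ℝ)] := by
          gcongr 1
          refine setLIntegral_mono (hG.const_mul _) fun q hq => ?_
          rw [hF]
          have hN := C.NN_ge (hBf k hq)
          have hh := hBh k q hq
          have : ENNReal.ofReal (h k) * (G q * ENNReal.ofReal (1 / NN Ω q)) =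
              ENNReal.ofReal (h k * (1 / NN Ω q)) * G q := by
            rw [ENNReal.ofReal_mul (by linarith)]; ring
          simp only
          rw [this]
          gcongr
          have hN0 : 0 < NN Ω q := by linarith
          rw [mul_one_div, div_le_iff₀ hN0]
          have : t ≤ t / r * NN Ω q := by
            rw [div_mul_eq_mul_div, le_div_iff₀ hr]; gcongr
          nlinarith [hh.1]
      _ = _ := by rw [lintegral_const_mul _ hG]; ring

end Cfg

end HH

namespace HH

open Set Filter Topology

lemma NN_nonneg {n : ℕ} (Ω : Set (Eu n)) (q : Eu n) : 0 ≤ NN Ω q := by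
  refine Real.iSup_nonneg fun k => ?_
  unfold Nk
  have := dlt_nonneg Ω ((1 - 1 / ((k : ℝ) + 2)) • q)
  positivity

lemma Kc_tendsto (m : ℕ) (a : ℝ) : Tendsto (fun θ : ℝ => Kc m (θ * a)) (𝓝[>] 0) (𝓝 1) := by
  have h : Tendsto (fun θ : ℝ => ENNReal.ofReal ((1 + θ * a) ^ (m + 1) * ((1 - θ * a)⁻¹) ^ (m + 1)))
      (𝓝[>] 0) (𝓝 1) := by
    rw [← ENNReal.ofReal_one]
    refine ENNReal.tendsto_ofReal (Tendsto.mono_left ?_ nhdsWithin_le_nhds)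
    have : ContinuousAt (fun θ : ℝ => (1 + θ * a) ^ (m + 1) * ((1 - θ * a)⁻¹) ^ (m + 1)) 0 := by
      fun_prop (disch := simp)
    simpa [ContinuousAt] using this
  refine h.congr' ?_
  have h1 : ∀ᶠ θ : ℝ in 𝓝[>] 0, 0 < 1 + θ * a :=
    nhdsWithin_le_nhds (ContinuousAt.eventually_lt (f := fun _ => (0:ℝ)) (by fun_prop) (by fun_prop) (by simp))
  have h2 : ∀ᶠ θ : ℝ in 𝓝[>] 0, 0 < 1 - θ * a :=
    nhdsWithin_le_nhds (ContinuousAt.eventually_lt (f := fun _ => (0:ℝ)) (by fun_prop) (by fun_prop) (by simp))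
  filter_upwards [h1, h2] with θ h1 h2
  unfold Kc
  rw [ENNReal.ofReal_mul (by positivity), ENNReal.ofReal_pow h1.le, ENNReal.ofReal_pow (inv_nonneg.2 h2.le)]

namespace Cfg

lemma lim_est {m : ℕ} {Ω : Set (Eu (m + 1))} {r R : ℝ} (C : Cfg Ω r R) {c : ENNReal}
    (hc0 : c ≠ 0) (hct : c ≠ ⊤)
    (hc : ∀ s : Set (Eu m), volume s = c * μH[(m:ℝ)] s)
    {G : Eu (m + 1) → ENNReal} (hG : Measurable G) :
    c * ENNReal.ofReal r * μH[(m:ℝ)] (frontier Ω) ≤ ((m:ENNReal) + 1) * volume Ω ∧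
    ((m:ENNReal) + 1) * ∫⁻ x in Ω, G (qm Ω x) * ENNReal.ofReal (1 / NN Ω (qm Ω x)) ≤
      c * ∫⁻ x in frontier Ω, G x ∂μH[(m:ℝ)] := by
  have hr := C.hr0
  have hK := Kc_tendsto m (1 / r + 1 + R / r)
  have ev : ∀ᶠ θ : ℝ in 𝓝[>] 0, 0 < θ ∧ θ * (1 + R) < r ∧ θ * (1 / r + 1 + R / r) < 1 := by
    have h1 : ∀ᶠ θ : ℝ in 𝓝[>] 0, θ * (1 + R) < r :=
      nhdsWithin_le_nhds (ContinuousAt.eventually_lt (g := fun _ => r) (by fun_prop) (by fun_prop) (by simpa))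
    have h2 : ∀ᶠ θ : ℝ in 𝓝[>] 0, θ * (1 / r + 1 + R / r) < 1 :=
      nhdsWithin_le_nhds (ContinuousAt.eventually_lt (g := fun _ => (1:ℝ)) (by fun_prop) (by fun_prop) (by simp))
    filter_upwards [h1, h2, self_mem_nhdsWithin] with θ a b d using ⟨d, a, b⟩
  constructor
  · have t1 : Tendsto (fun θ : ℝ => c * ENNReal.ofReal (r - θ * (1 + R)) * μH[(m:ℝ)] (frontier Ω)) (𝓝[>] 0)
        (𝓝 (c * ENNReal.ofReal r * μH[(m:ℝ)] (frontier Ω))) := by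
      refine ENNReal.Tendsto.mul_const (ENNReal.Tendsto.const_mul (ENNReal.tendsto_ofReal ?_) (Or.inr hct)) (Or.inl ?_)
      · refine Tendsto.mono_left ?_ nhdsWithin_le_nhds
        have : ContinuousAt (fun θ : ℝ => r - θ * (1 + R)) 0 := by fun_prop
        simpa [ContinuousAt] using this
      · exact mul_ne_zero hc0 (by simpa using hr)
    have t2 : Tendsto (fun θ : ℝ => Kc m (θ * (1 / r + 1 + R / r)) * (((m:ENNReal) + 1) * volume Ω)) (𝓝[>] 0)
        (𝓝 (1 * (((m:ENNReal) + 1) * volume Ω))) :=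
      ENNReal.Tendsto.mul_const hK (Or.inl one_ne_zero)
    rw [one_mul] at t2
    refine le_of_tendsto_of_tendsto t1 t2 ?_
    filter_upwards [ev] with θ h
    exact (C.sum_est hc h.1 rfl h.2.1 rfl h.2.2 hG).1
  · have t3 : Tendsto (fun θ : ℝ => ENNReal.ofReal (1 + θ * (1 + R) / r)) (𝓝[>] 0) (𝓝 1) := by
      rw [← ENNReal.ofReal_one]
      refine ENNReal.tendsto_ofReal (Tendsto.mono_left ?_ nhdsWithin_le_nhds)
      have : ContinuousAt (fun θ : ℝ => 1 + θ * (1 + R) / r) 0 := by fun_prop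
      simpa [ContinuousAt] using this
    have t2 := ENNReal.Tendsto.mul_const (b := c * ∫⁻ x in frontier Ω, G x ∂μH[(m:ℝ)])
      (ENNReal.Tendsto.mul hK (Or.inl one_ne_zero) t3 (Or.inl one_ne_zero)) (Or.inl (by simp))
    rw [one_mul, one_mul] at t2
    refine ge_of_tendsto t2 ?_
    filter_upwards [ev] with θ h
    exact (C.sum_est hc h.1 rfl h.2.1 rfl h.2.2 hG).2

lemma fin_est {m : ℕ} {Ω : Set (Eu (m + 1))} {r R : ℝ} (C : Cfg Ω r R) {f : Eu (m + 1) → ℝ}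
    (hfm : Measurable f) (hfc : ContinuousOn f (closure Ω))
    (hf0 : ∀ x ∈ closure Ω, 0 ≤ f x)
    (hkey : ∀ ε : ℝ, 0 < ε → ∫ x in Ω, f x ≤ (1 + r / ε) * ∫ x in Ω ∩ {x | dlt Ω x < ε}, f x) :
    (1 / (volume Ω).toReal) * ∫ x in Ω, f x ≤
      (((m:ℝ) + 1) / (μH[(m:ℝ)] (frontier Ω)).toReal) * ∫ x in frontier Ω, f x ∂μH[(m:ℝ)] := by
  obtain ⟨c, hc0, hct, hc⟩ := exists_cst m
  have hr := C.hr0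
  have hvol : volume Ω < ⊤ := C.hb.measure_lt_top
  have hvol0 : 0 < volume Ω := C.ho.measure_pos volume C.hne
  have hIII := (C.lim_est hc0 hct hc (measurable_const (a := (0 : ENNReal)))).1
  set S := μH[(m:ℝ)] (frontier Ω) with hS
  have hSt : S ≠ ⊤ := by
    intro h
    rw [h, ENNReal.mul_top (mul_ne_zero hc0 (by simpa using hr))] at hIII
    exact (ENNReal.mul_lt_top (by simp) hvol).not_ge hIII
  have hη : ∀ η : ℝ, 0 < η → ∫⁻ x in Ω, ENNReal.ofReal (f x) ≤ ENNReal.ofReal r * (c *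
      (∫⁻ x in frontier Ω, ENNReal.ofReal (f x) ∂μH[(m:ℝ)] + ENNReal.ofReal η * S)) := by
    intro η hη
    have h1 := C.inner_est hfm hfc hf0 hkey hη
    have h2 := (C.lim_est hc0 hct hc (G := fun q => ENNReal.ofReal (f q + η))
      ((hfm.add_const η).ennreal_ofReal)).2
    refine h1.trans ?_
    have e1 : ∀ x, ENNReal.ofReal ((f (qm Ω x) + η) / NN Ω (qm Ω x)) =
        ENNReal.ofReal (f (qm Ω x) + η) * ENNReal.ofReal (1 / NN Ω (qm Ω x)) := by
      intro x
      rw [← ENNReal.ofReal_mul' (one_div_nonneg.2 (NN_nonneg _ _)), mul_one_div]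
    simp only [e1]
    have e2 : ENNReal.ofReal (((m:ℝ) + 1) * r) = ENNReal.ofReal r * ((m:ENNReal) + 1) := by
      rw [mul_comm, ENNReal.ofReal_mul hr.le]
      congr 1
      exact_mod_cast ENNReal.ofReal_natCast (m + 1)
    rw [e2, mul_assoc]
    refine mul_le_mul_right (h2.trans (mul_le_mul_right ?_ c)) _
    calc ∫⁻ x in frontier Ω, ENNReal.ofReal (f x + η) ∂μH[(m:ℝ)]
        ≤ ∫⁻ x in frontier Ω, (ENNReal.ofReal (f x) + ENNReal.ofReal η) ∂μH[(m:ℝ)] :=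
          lintegral_mono fun x => ENNReal.ofReal_add_le
      _ = _ := by
          rw [lintegral_add_right _ measurable_const, setLIntegral_const]
  have hfcomp : IsCompact (frontier Ω) :=
      C.hb.isCompact_closure.of_isClosed_subset isClosed_frontier frontier_subset_closure
  have hlim : ∫⁻ x in Ω, ENNReal.ofReal (f x) ≤ ENNReal.ofReal r * (c *
      (∫⁻ x in frontier Ω, ENNReal.ofReal (f x) ∂μH[(m:ℝ)])) := by
    have t1 : Tendsto (fun η : ℝ => ENNReal.ofReal r * (c *
      (∫⁻ x in frontier Ω, ENNReal.ofReal (f x) ∂μH[(m:ℝ)] + ENNReal.ofReal η * S))) (𝓝[>] 0)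
      (𝓝 (ENNReal.ofReal r * (c *
      (∫⁻ x in frontier Ω, ENNReal.ofReal (f x) ∂μH[(m:ℝ)] + ENNReal.ofReal 0 * S)))) := by
      refine ENNReal.Tendsto.const_mul (ENNReal.Tendsto.const_mul (Tendsto.add tendsto_const_nhds
        (ENNReal.Tendsto.mul_const (ENNReal.tendsto_ofReal ?_) (Or.inr hSt))) (Or.inr hct))
        (Or.inr ENNReal.ofReal_ne_top)
      exact Tendsto.mono_left tendsto_id nhdsWithin_le_nhds
    rw [ENNReal.ofReal_zero, zero_mul, add_zero] at t1
    refine ge_of_tendsto t1 ?_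
    filter_upwards [self_mem_nhdsWithin] with η h using hη η h
  have hi1 : IntegrableOn f Ω volume :=
    (hfc.integrableOn_compact C.hb.isCompact_closure).mono_set subset_closure
  obtain ⟨K, hK⟩ := hfcomp.exists_bound_of_continuousOn (hfc.mono frontier_subset_closure)
  have hi2 : IntegrableOn f (frontier Ω) μH[(m:ℝ)] := by
    have : IsFiniteMeasure ((μH[(m:ℝ)]).restrict (frontier Ω)) :=
      ⟨by rw [Measure.restrict_apply_univ]; exact hSt.lt_top⟩
    refine Integrable.of_bound hfm.aestronglyMeasurable K ?_
    filter_upwards [ae_restrict_mem isClosed_frontier.measurableSet] with x hx using hK x hx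
  have hn1 : 0 ≤ᵐ[volume.restrict Ω] f := by
    filter_upwards [ae_restrict_mem C.ho.measurableSet] with x hx using hf0 x (subset_closure hx)
  have hn2 : 0 ≤ᵐ[(μH[(m:ℝ)]).restrict (frontier Ω)] f := by
    filter_upwards [ae_restrict_mem isClosed_frontier.measurableSet] with x hx using
      hf0 x (frontier_subset_closure hx)
  rw [← ofReal_integral_eq_lintegral_ofReal hi1 hn1, ← ofReal_integral_eq_lintegral_ofReal hi2 hn2] at hlim
  set I := ∫ x in Ω, f x with hI
  set J := ∫ x in frontier Ω, f x ∂μH[(m:ℝ)] with hJ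
  have hI0 : 0 ≤ I := integral_nonneg_of_ae hn1
  have hJ0 : 0 ≤ J := integral_nonneg_of_ae hn2
  have hreal : I ≤ r * (c.toReal * J) := by
    have := ENNReal.toReal_mono (by finiteness) hlim
    rwa [ENNReal.toReal_mul, ENNReal.toReal_mul, ENNReal.toReal_ofReal hI0, ENNReal.toReal_ofReal hJ0,
      ENNReal.toReal_ofReal hr.le] at this
  have hIIIr : c.toReal * r * S.toReal ≤ ((m:ℝ) + 1) * (volume Ω).toReal := by
    have := ENNReal.toReal_mono (ENNReal.mul_lt_top (by simp) hvol).ne hIII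
    rw [ENNReal.toReal_mul, ENNReal.toReal_mul, ENNReal.toReal_mul, ENNReal.toReal_ofReal hr.le] at this
    simpa [ENNReal.toReal_add] using this
  have hv : 0 < (volume Ω).toReal := ENNReal.toReal_pos hvol0.ne' hvol.ne
  have hS0 : 0 ≤ S.toReal := ENNReal.toReal_nonneg
  rcases hS0.eq_or_lt with h0 | h0
  · have hSz : S = 0 := by
      rcases (ENNReal.toReal_eq_zero_iff _).1 h0.symm with h | h
      · exact h
      · exact absurd h hSt
    have hJz : J = 0 := by
      rw [hJ, Measure.restrict_eq_zero.2 hSz]; simp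
    rw [hJz] at hreal ⊢
    have : I = 0 := le_antisymm (by simpa using hreal) hI0
    rw [this]; simp
  · rw [one_div, ← div_eq_inv_mul, div_le_iff₀ hv]
    refine hreal.trans ?_
    have : r * (c.toReal * J) = c.toReal * r * S.toReal * (J / S.toReal) := by field_simp
    rw [this]
    calc c.toReal * r * S.toReal * (J / S.toReal) ≤ ((m:ℝ) + 1) * (volume Ω).toReal * (J / S.toReal) := by
          gcongr
      _ = _ := by ring

lemma fin_est' {m : ℕ} {Ω : Set (Eu (m + 1))} {r R : ℝ} (C : Cfg Ω r R) {f : Eu (m + 1) → ℝ}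
    (hfc : ContinuousOn f (closure Ω))
    (hf0 : ∀ x ∈ Ω, 0 ≤ f x) (hS : SubH f Ω) :
    0 ≤ ∫ x in frontier Ω, f x ∂μH[(m:ℝ)] ∧ (1 / (volume Ω).toReal) * ∫ x in Ω, f x ≤
      (((m:ℝ) + 1) / (μH[(m:ℝ)] (frontier Ω)).toReal) * ∫ x in frontier Ω, f x ∂μH[(m:ℝ)] := by
  classical
  have hf0' : ∀ x ∈ closure Ω, 0 ≤ f x := by
    intro x hx
    have := hfc.mono (subset_refl _)
    have h1 : MapsTo f (closure Ω) (closure (Ici 0)) := (show MapsTo f Ω (Ici 0) from hf0).closure_of_continuousOn hfc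
    simpa using h1 hx
  refine ⟨setIntegral_nonneg isClosed_frontier.measurableSet fun x hx => hf0' x (frontier_subset_closure hx), ?_⟩
  set F := (closure Ω).indicator f with hF
  have hFe : EqOn F f (closure Ω) := fun x hx => indicator_of_mem hx f
  have hFm : Measurable F := by
    have := ContinuousOn.measurable_piecewise (f := f) (g := (0 : Eu (m + 1) → ℝ)) (s := closure Ω) hfc continuousOn_const
      isClosed_closure.measurableSet
    rwa [piecewise_eq_indicator] at this
  have e1 : ∀ s ⊆ closure Ω, MeasurableSet s → ∫ x in s, F x = ∫ x in s, f x := fun s hs hm =>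
    setIntegral_congr_fun hm (hFe.mono hs)
  have e2 : ∫ x in frontier Ω, F x ∂μH[(m:ℝ)] = ∫ x in frontier Ω, f x ∂μH[(m:ℝ)] :=
    setIntegral_congr_fun isClosed_frontier.measurableSet (hFe.mono frontier_subset_closure)
  have := C.fin_est hFm (hfc.congr hFe) (fun x hx => by rw [hFe hx]; exact hf0' x hx) (by
    intro ε hε
    rw [e1 _ subset_closure C.ho.measurableSet, e1 _ (inter_subset_left.trans subset_closure)
      (C.ho.measurableSet.inter (measurableSet_lt (dlt_cont Ω).measurable measurable_const))]
    exact key_ineq' C.hn C.ho C.hc C.hne C.hb hfc hf0 hS C.hmax C.hr0.le hε)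
  rwa [e1 _ subset_closure C.ho.measurableSet, e2] at this

end Cfg

lemma main {m : ℕ} {Ω : Set (Eu (m + 1))} (ho : IsOpen Ω) (hb : Bornology.IsBounded Ω)
    (hc : Convex ℝ Ω) (hne : Ω.Nonempty) {f : Eu (m + 1) → ℝ}
    (hfc : ContinuousOn f (closure Ω))
    (hf0 : ∀ x ∈ Ω, 0 ≤ f x) (hS : SubH f Ω) :
    0 ≤ ∫ x in frontier Ω, f x ∂μH[(m:ℝ)] ∧ (1 / (volume Ω).toReal) * ∫ x in Ω, f x ≤
      (((m:ℝ) + 1) / (μH[(m:ℝ)] (frontier Ω)).toReal) * ∫ x in frontier Ω, f x ∂μH[(m:ℝ)] := by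
  obtain ⟨x0, hx0, hmax⟩ := hb.isCompact_closure.exists_isMaxOn hne.closure (dlt_cont Ω).continuousOn
  have hmax' : ∀ x, dlt Ω x ≤ dlt Ω x0 := by
    intro x
    by_cases hx : x ∈ Ω
    · exact hmax (subset_closure hx)
    · rw [dlt_zero hx]; exact dlt_nonneg _ _
  have hr0 : 0 < dlt Ω x0 := by
    obtain ⟨y, hy⟩ := hne
    refine lt_of_lt_of_le ?_ (hmax' y)
    refine (ho.isClosed_compl.notMem_iff_infDist_pos (compl_nonempty (Nat.succ_pos m) hb)).1 ?_
    simpa using hy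
  let e : Eu (m + 1) ≃ᵢ Eu (m + 1) := IsometryEquiv.addLeft x0
  have he : ∀ y, e y = x0 + y := fun y => rfl
  set Ω' : Set (Eu (m + 1)) := e ⁻¹' Ω with hΩ'
  have hdl : ∀ y, dlt Ω' y = dlt Ω (x0 + y) := by
    intro y
    unfold dlt
    rw [hΩ', ← preimage_compl, ← he, ← Metric.infDist_image e.isometry, image_preimage_eq _ e.surjective]
  have hcl : closure Ω' = e ⁻¹' closure Ω := (e.toHomeomorph.preimage_closure Ω).symm
  have hfr : frontier Ω' = e ⁻¹' frontier Ω := (e.toHomeomorph.preimage_frontier Ω).symm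
  have hb' : Bornology.IsBounded Ω' := e.isometry.antilipschitz.isBounded_preimage hb
  obtain ⟨R, hR⟩ := hb'.closure.exists_norm_le
  have C : Cfg Ω' (dlt Ω x0) R :=
    { hn := Nat.succ_pos m
      ho := ho.preimage e.continuous
      hc := by
        have := hc.translate_preimage_right x0
        exact this
      hb := hb'
      hr := by rw [hdl, add_zero]
      hmax := fun x => by rw [hdl]; exact hmax' _
      hr0 := hr0
      hR := hR }
  have hmain := C.fin_est' (f := fun y => f (x0 + (1:ℝ) • y))
    (by
      simp only [one_smul]
      refine hfc.comp e.continuous.continuousOn ?_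
      intro y hy
      rw [hcl] at hy
      exact hy)
    (fun y hy => by simp only [one_smul]; exact hf0 _ hy)
    (hS.comp_affine x0 1 C.ho (fun y hy => by rw [one_smul]; exact hy))
  simp only [one_smul] at hmain
  have mp1 : MeasurePreserving e volume volume := measurePreserving_add_left volume x0
  have mp2 : MeasurePreserving e μH[(m:ℝ)] μH[(m:ℝ)] := e.measurePreserving_hausdorffMeasure m
  have hemb : MeasurableEmbedding e := e.toHomeomorph.measurableEmbedding
  have i1 : ∫ y in Ω', f (x0 + y) = ∫ x in Ω, f x := mp1.setIntegral_preimage_emb hemb f Ω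
  have i2 : ∫ y in frontier Ω', f (x0 + y) ∂μH[(m:ℝ)] = ∫ x in frontier Ω, f x ∂μH[(m:ℝ)] := by
    rw [hfr]; exact mp2.setIntegral_preimage_emb hemb f _
  have v1 : volume Ω' = volume Ω := mp1.measure_preimage_emb hemb Ω
  have v2 : μH[(m:ℝ)] (frontier Ω') = μH[(m:ℝ)] (frontier Ω) := by
    rw [hfr]; exact mp2.measure_preimage_emb hemb _
  rw [i1, i2, v1, v2] at hmain
  exact hmain

end HH

theorem hermite_hadamard_subharmonic_odd
    (n : ℕ) (hn : Odd n)
    (Ω : Set (EuclideanSpace ℝ (Fin n)))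
    (hΩo : IsOpen Ω) (hΩb : Bornology.IsBounded Ω)
    (hΩc : Convex ℝ Ω) (hΩne : (interior Ω).Nonempty)
    (f : EuclideanSpace ℝ (Fin n) → ℝ)
    (hfc : ContinuousOn f (closure Ω))
    (hfpos : ∀ x ∈ Ω, 0 < f x)
    (hf1 : ∀ x ∈ Ω, DifferentiableAt ℝ f x)
    (hf2 : ∀ x ∈ Ω, DifferentiableAt ℝ (fun y => fderiv ℝ f y) x)
    (hsub : ∀ x ∈ Ω, 0 ≤ laplacian f x) :
    (1 / (volume Ω).toReal) * ∫ x in Ω, f x ≤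
      ((n : ℝ) ^ (3 / 2 : ℝ) / (μH[(n : ℝ) - 1] (frontier Ω)).toReal) *
        ∫ x in frontier Ω, f x ∂μH[(n : ℝ) - 1] := by
  obtain ⟨m, rfl⟩ : ∃ m, n = m + 1 := ⟨n - 1, (Nat.sub_add_cancel hn.pos).symm⟩
  have hm : ((m + 1 : ℕ) : ℝ) - 1 = m := by push_cast; ring
  rw [hm]
  obtain ⟨h0, h1⟩ := HH.main hΩo hΩb hΩc (hΩne.mono interior_subset) hfc (fun x hx => (hfpos x hx).le)
    ⟨hf1, hf2, hsub⟩
  refine h1.trans ?_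
  gcongr
  have h2 : (1:ℝ) ≤ ((m + 1 : ℕ) : ℝ) := by push_cast; linarith [(Nat.cast_nonneg m : (0:ℝ) ≤ m)]
  have h3 := Real.rpow_le_rpow_of_exponent_le h2 (show (1:ℝ) ≤ 3 / 2 by norm_num)
  rw [Real.rpow_one] at h3
  push_cast at h3 ⊢
  exact h3
end

section
/- Let ω_n denote the volume of the unit ball in ℝⁿ. Then ω_n^{1/n} √n → √(2πe) as n → ∞. -/
open MeasureTheory Filter

lemma aux_log_div : Tendsto (fun n : ℕ => Real.log n / n) atTop (nhds 0) :=
  (Real.isLittleO_log_id_atTop.tendsto_div_nhds_zero).comp tendsto_natCast_atTop_atTop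

lemma aux_const_div (c : ℝ) : Tendsto (fun n : ℕ => c / (n : ℝ)) atTop (nhds 0) :=
  tendsto_const_nhds.div_atTop tendsto_natCast_atTop_atTop

lemma aux_fact : Tendsto (fun n : ℕ => Real.log (n.factorial) / n - Real.log n) atTop
    (nhds (-1)) := by
  have h1 : Tendsto (fun n : ℕ => Real.log (Stirling.stirlingSeq n) / n) atTop (nhds 0) := by
    have h := Stirling.tendsto_stirlingSeq_sqrt_pi.log (by positivity)
    exact h.div_atTop tendsto_natCast_atTop_atTop
  have h2 := ((h1.add ((aux_const_div (Real.log 2)).const_mul (1/2))).add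
    (aux_log_div.const_mul (1/2))).sub_const 1
  have e : (0 + 1/2 * 0 + 1/2 * 0 - 1 : ℝ) = -1 := by norm_num
  rw [e] at h2
  refine h2.congr' ?_
  filter_upwards [eventually_gt_atTop 0] with n hn
  have hn' : (0 : ℝ) < n := by exact_mod_cast hn
  rw [Stirling.log_stirlingSeq_formula, Real.log_mul (by norm_num) hn'.ne',
    Real.log_div hn'.ne' (Real.exp_pos 1).ne', Real.log_exp]
  field_simp
  ring

lemma aux_prod (n : ℕ) : Real.Gamma ((n : ℝ) / 2 + 1/2) * Real.Gamma ((n : ℝ) / 2 + 1) =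
    n.factorial * (2:ℝ)^(-(n:ℝ)) * √Real.pi := by
  have h := Real.Gamma_mul_Gamma_add_half_of_pos (s := (n : ℝ) / 2 + 1/2) (by positivity)
  rw [show (n : ℝ) / 2 + 1/2 + 1/2 = n / 2 + 1 by ring,
    show 2 * ((n : ℝ) / 2 + 1/2) = n + 1 by ring, Real.Gamma_nat_eq_factorial,
    show (1 - ((n:ℝ) + 1)) = -n by ring] at h
  exact h

lemma aux_logprod (n : ℕ) : Real.log (Real.Gamma ((n : ℝ) / 2 + 1/2)) +
    Real.log (Real.Gamma ((n : ℝ) / 2 + 1)) =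
    Real.log n.factorial - n * Real.log 2 + Real.log √Real.pi := by
  have g1 : 0 < Real.Gamma ((n : ℝ) / 2 + 1/2) := Real.Gamma_pos_of_pos (by positivity)
  have g2 : 0 < Real.Gamma ((n : ℝ) / 2 + 1) := Real.Gamma_pos_of_pos (by positivity)
  rw [← Real.log_mul g1.ne' g2.ne', aux_prod, Real.log_mul (by positivity) (by positivity),
    Real.log_mul (by positivity) (by positivity), Real.log_rpow (by norm_num)]
  ring

lemma aux_mono {a b : ℝ} (ha : 2 ≤ a) (hab : a ≤ b) :
    Real.log (Real.Gamma a) ≤ Real.log (Real.Gamma b) :=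
  Real.log_le_log (Real.Gamma_pos_of_pos (by linarith))
    (Real.Gamma_strictMonoOn_Ici.monotoneOn (Set.mem_Ici.2 ha) (Set.mem_Ici.2 (by linarith)) hab)

lemma aux_gamma : Tendsto (fun n : ℕ => 2 * Real.log (Real.Gamma ((n : ℝ) / 2 + 1)) / n
    - Real.log n) atTop (nhds (-1 - Real.log 2)) := by
  have lo := (aux_fact.sub_const (Real.log 2)).add (aux_const_div (Real.log √Real.pi))
  have hi := lo.add aux_log_div
  simp only [add_zero] at lo hi
  refine tendsto_of_tendsto_of_tendsto_of_le_of_le' lo hi ?_ ?_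
  · filter_upwards [eventually_ge_atTop 3] with n hn
    have hn' : (3 : ℝ) ≤ n := by exact_mod_cast hn
    have h := aux_logprod n
    have m := aux_mono (a := (n : ℝ) / 2 + 1/2) (b := n / 2 + 1) (by linarith) (by linarith)
    have : (Real.log n.factorial - n * Real.log 2 + Real.log √Real.pi) / n ≤
      2 * Real.log (Real.Gamma ((n : ℝ) / 2 + 1)) / n := by
      gcongr; linarith
    have e : (Real.log n.factorial - n * Real.log 2 + Real.log √Real.pi) / n =
      Real.log n.factorial / n - Real.log 2 + Real.log √Real.pi / n := by field_simp
    linarith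
  · filter_upwards [eventually_ge_atTop 3] with n hn
    have hn' : (3 : ℝ) ≤ n := by exact_mod_cast hn
    have h := aux_logprod (n + 1)
    have m := aux_mono (a := (n : ℝ) / 2 + 1) (b := n / 2 + 3/2) (by linarith) (by linarith)
    push_cast [Nat.factorial_succ] at h
    rw [Real.log_mul (by positivity) (by positivity),
      show ((n:ℝ) + 1) / 2 + 1 / 2 = n / 2 + 1 by ring,
      show ((n:ℝ) + 1) / 2 + 1 = n / 2 + 3/2 by ring] at h
    have l : Real.log ((n:ℝ) + 1) ≤ Real.log n + Real.log 2 := by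
      rw [← Real.log_mul (by positivity) (by norm_num)]
      exact Real.log_le_log (by positivity) (by linarith)
    have : 2 * Real.log (Real.Gamma ((n : ℝ) / 2 + 1)) / n ≤
      (Real.log n.factorial - n * Real.log 2 + Real.log √Real.pi + Real.log n) / n := by
      gcongr; linarith
    have e : (Real.log n.factorial - n * Real.log 2 + Real.log √Real.pi + Real.log n) / n =
      Real.log n.factorial / n - Real.log 2 + Real.log √Real.pi / n + Real.log n / n := by
      field_simp
    linarith

/-- If `ω_n` denotes the volume of the unit ball in `ℝⁿ`, then
`ω_n^(1/n) √n → √(2πe)` as `n → ∞`. -/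
theorem unit_ball_volume_root_limit :
    Tendsto
      (fun n : ℕ =>
        (volume (Metric.ball (0 : EuclideanSpace ℝ (Fin n)) 1)).toReal ^ ((n : ℝ)⁻¹) *
          Real.sqrt n)
      atTop (nhds (Real.sqrt (2 * Real.pi * Real.exp 1))) := by
  have h := ((aux_gamma.const_sub (Real.log Real.pi)).const_mul (1/2)).rexp
  have e : Real.exp (1/2 * (Real.log Real.pi - (-1 - Real.log 2))) =
      Real.sqrt (2 * Real.pi * Real.exp 1) := by
    rw [Real.sqrt_eq_rpow, Real.rpow_def_of_pos (by positivity),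
      Real.log_mul (by positivity) (by positivity), Real.log_mul (by positivity) (by positivity),
      Real.log_exp]
    congr 1; ring
  rw [e] at h
  refine h.congr' ?_
  filter_upwards [eventually_gt_atTop 0] with n hn
  have hn' : (0 : ℝ) < n := by exact_mod_cast hn
  have : Nonempty (Fin n) := ⟨⟨0, hn⟩⟩
  have g : 0 < Real.Gamma ((n : ℝ) / 2 + 1) := Real.Gamma_pos_of_pos (by positivity)
  rw [EuclideanSpace.volume_ball]
  simp only [ENNReal.ofReal_one, one_pow, one_mul, Fintype.card_fin]
  rw [ENNReal.toReal_ofReal (by positivity), Real.rpow_def_of_pos (by positivity),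
    Real.sqrt_eq_rpow (n : ℝ), Real.rpow_def_of_pos hn', ← Real.exp_add,
    Real.log_div (by positivity) g.ne', Real.log_pow, Real.log_sqrt (by positivity)]
  congr 1
  field_simp
  ring
end
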